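/- arXiv:2102.10942 — 5 statements merged into one kernel-verified Lean document; each statement's English description precedes it below -/
import Mathlib

section
/- With the trinomial-curve notation, for all integers i and j one has |N_{ij}| ≤ 2·g̃·√q, where g̃ = (k − d − e − f + 2)/2. -/
/-!
The equation of the curve, divided by its right-hand monomial, reads `s·φ₁(x,y) + t·φ₂(x,y) = 1` with
`s = ρ^i`, `t = ρ^j`, where `φ` is the endomorphism of the torus `(Fˣ)²` with exponent matrix `B`.
By orthogonality of characters, the number of preimages of `(u, v)` under `φ` is the sum of
`χ u * ψ v` over the group `A` of pairs of characters with `(χ, ψ) ∘ φ = 1` (`card_pair_fiber`).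
Summing over `u + v = 1` expresses the number of points as a sum over `A` of Jacobi sums `J(χ, ψ)`
weighted by `χ(s⁻¹) ψ(t⁻¹)` (`card_curve`).

The pairs with `ψ = 1`, with `χ = 1`, or with `χψ = 1` form cyclic groups of orders `d`, `e`, `f`;
their Jacobi sums are elementary and contribute exactly `q + 1 - D_d(i) - D_e(j) - D_f(i-j+w)`
(`sum_torsion`). All other Jacobi sums have absolute value `√q` (`norm_jacobiSum`). Since the
degenerate families meet only in the trivial pair, `#A - d - e - f + 2` pairs remain, and
`#A = k` is the number of solutions of a 2 × 2 linear system over a finite cyclic group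
(`card_pair`), computed by reducing the matrix to triangular form.
-/

open Finset

/-! ### Linear systems over finite cyclic groups -/


section Cyclic
variable {X : Type*} [CommGroup X] [IsCyclic X] [Fintype X] [DecidableEq X]

lemma card_pow_eq_one_nat (n : ℕ) :
    #{x : X | x ^ n = 1} = (Nat.card X).gcd n := by
  rw [← IsCyclic.card_powMonoidHom_ker (G := X) n, Nat.card_eq_fintype_card,
    Fintype.card_subtype]
  congr 1
  ext x
  simp [MonoidHom.mem_ker]

set_option linter.unusedSectionVars false in
/-- In a cyclic group of order `m`, the `n`-th powers are the elements killed by `m / gcd(m, n)`. -/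
lemma mem_range_pow_iff (n : ℕ) (z : X) :
    z ∈ (powMonoidHom n : X →* X).range ↔ z ^ (Nat.card X / (Nat.card X).gcd n) = 1 := by
  set m := Nat.card X
  have hm : 0 < m := Nat.card_pos
  have hdvd : m.gcd n ∣ m := Nat.gcd_dvd_left _ _
  have hle : (powMonoidHom n : X →* X).range ≤ (powMonoidHom (m / m.gcd n) : X →* X).ker := by
    rintro _ ⟨x, rfl⟩
    obtain ⟨c, hc⟩ := Nat.gcd_dvd_right m n
    simp only [powMonoidHom_apply, MonoidHom.mem_ker]
    rw [← pow_mul]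
    have : n * (m / m.gcd n) = m * c := by
      obtain ⟨t, ht⟩ := hdvd
      have ht' : m / m.gcd n = t :=
        Nat.div_eq_of_eq_mul_right (Nat.gcd_pos_of_pos_left _ hm) ht
      rw [ht']
      conv_lhs => rw [hc]
      conv_rhs => rw [ht]
      ring
    rw [this, pow_mul, pow_card_eq_one', one_pow]
  have heq := Subgroup.eq_of_le_of_card_ge hle (by
    rw [IsCyclic.card_powMonoidHom_ker, IsCyclic.card_powMonoidHom_range]
    exact (Nat.gcd_eq_right (Nat.div_dvd_of_dvd hdvd)).le)
  rw [heq]; rfl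

lemma card_pow_eq_nat (n : ℕ) (z : X) :
    #{x : X | x ^ n = z} =
      if z ^ (Nat.card X / (Nat.card X).gcd n) = 1 then (Nat.card X).gcd n else 0 := by
  split_ifs with h
  · obtain ⟨y, hy⟩ := (mem_range_pow_iff n z).2 h
    have := MonoidHom.card_fiber_eq_of_mem_range (powMonoidHom n : X →* X) (x := z) (y := 1)
      ⟨y, hy⟩ ⟨1, by simp⟩
    simp only [powMonoidHom_apply] at this
    rw [this, card_pow_eq_one_nat]
  · rw [card_eq_zero, filter_eq_empty_iff]
    intro x _ hx
    exact h ((mem_range_pow_iff n z).1 ⟨x, hx⟩)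

lemma card_zpow_eq (n : ℤ) (z : X) :
    #{x : X | x ^ n = z} =
      if z ^ (Nat.card X / (Nat.card X).gcd n.natAbs) = 1 then (Nat.card X).gcd n.natAbs else 0 := by
  obtain ⟨k, rfl | rfl⟩ := n.eq_nat_or_neg
  · simpa using card_pow_eq_nat k z
  · have := card_pow_eq_nat k z⁻¹
    simpa [inv_eq_iff_eq_inv] using this

/-- The case of a triangular matrix of the count in `card_pair`: for fixed second coordinate `y`,
the first equation is solvable iff `y ^ c` is a `g`-th power, and then has `gcd(g, m)` solutions. -/
lemma card_triangular (g c h : ℤ) :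
    #{p : X × X | p.1 ^ g * p.2 ^ c = 1 ∧ p.2 ^ h = 1} =
      Int.gcd ((Nat.card X : ℤ) * Int.gcd g (Int.gcd c (Int.gcd h (Nat.card X : ℤ)))) (g * h) := by
  set m := Nat.card X with hm
  set g' := m.gcd g.natAbs with hg'
  have hm0 : 0 < m := Nat.card_pos
  have hg0 : 0 < g' := Nat.gcd_pos_of_pos_left _ hm0
  have hdvd : g' ∣ m := Nat.gcd_dvd_left _ _
  -- fibre over the second coordinate; both conditions on `y` merge into one torsion condition
  have h1 : #{p : X × X | p.1 ^ g * p.2 ^ c = 1 ∧ p.2 ^ h = 1} =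
      ∑ y : X, if y ^ (Int.gcd h (c * (m / g' : ℕ))) = 1 then g' else 0 := by
    rw [card_filter, Fintype.sum_prod_type_right]
    refine sum_congr rfl fun y _ => ?_
    have h2 := card_zpow_eq g ((y ^ c)⁻¹)
    rw [← hm, ← hg'] at h2
    by_cases hy : y ^ h = 1
    · simp only [hy, and_true]
      rw [← card_filter]
      simp only [mul_eq_one_iff_eq_inv]
      rw [h2]
      refine if_congr ?_ rfl rfl
      rw [inv_pow, inv_eq_one, ← zpow_natCast, ← zpow_mul, ← orderOf_dvd_iff_zpow_eq_one,
        ← orderOf_dvd_iff_pow_eq_one, ← Int.natCast_dvd_natCast, Int.dvd_coe_gcd_iff,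
        orderOf_dvd_iff_zpow_eq_one (i := h)]
      simp [hy]
    · rw [if_neg]
      · simp [hy]
      · intro h3
        apply hy
        rw [← orderOf_dvd_iff_pow_eq_one, ← Int.natCast_dvd_natCast, Int.dvd_coe_gcd_iff] at h3
        exact orderOf_dvd_iff_zpow_eq_one.1 h3.1
  rw [h1, ← sum_filter, sum_const, smul_eq_mul, card_pow_eq_one_nat, ← hm]
  -- Both sides are the gcd of `m²`, `mg`, `mc`, `mh` and `gh`.
  obtain ⟨r, hr⟩ := hdvd
  have hr' : m / g' = r := by rw [hr, Nat.mul_div_cancel_left _ hg0]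
  rw [hr']
  have e1 : m.gcd (Int.gcd h (c * r)) * g' =
      ((m * m).gcd (m * g.natAbs)).gcd
        (((m * h.natAbs).gcd (g.natAbs * h.natAbs)).gcd (m * c.natAbs)) := by
    have a1 : c.natAbs * r * g' = m * c.natAbs := by rw [hr]; ring
    rw [Int.gcd_def, Int.natAbs_mul, Int.natAbs_natCast, ← Nat.gcd_mul_right, ← Nat.gcd_mul_right,
      a1, Nat.gcd_mul_left, Nat.gcd_mul_right, mul_comm g' h.natAbs, mul_comm h.natAbs]
  have e2 : Int.gcd ((m : ℤ) * Int.gcd g (Int.gcd c (Int.gcd h (m : ℤ)))) (g * h) =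
      ((m * g.natAbs).gcd ((m * c.natAbs).gcd ((m * h.natAbs).gcd (m * m)))).gcd
        (g.natAbs * h.natAbs) := by
    simp only [Int.gcd_def, Int.natAbs_mul, Int.natAbs_natCast, Nat.gcd_mul_left]
  rw [e1, e2]
  refine Nat.dvd_left_iff_eq.1 fun t => ?_
  simp only [Nat.dvd_gcd_iff]
  tauto

/-- The number of solutions of a nonsingular homogeneous 2 × 2 system in a cyclic group of order `m`.
A Bézout relation for the column `(a, b)` gives a unimodular change of equations making the system
triangular; it preserves the determinant and the gcd of the entries. -/
lemma card_pair (a b c h : ℤ) (hdet : a * h - b * c ≠ 0) :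
    #{p : X × X | p.1 ^ a * p.2 ^ c = 1 ∧ p.1 ^ b * p.2 ^ h = 1} =
      Int.gcd ((Nat.card X : ℤ) *
        Int.gcd a (Int.gcd b (Int.gcd c (Int.gcd h (Nat.card X : ℤ))))) (a * h - b * c) := by
  obtain ⟨a', ha⟩ : (Int.gcd a b : ℤ) ∣ a := Int.gcd_dvd_left ..
  obtain ⟨b', hb⟩ : (Int.gcd a b : ℤ) ∣ b := Int.gcd_dvd_right ..
  have hbez := Int.gcd_eq_gcd_ab a b
  set u := Int.gcdA a b
  set v := Int.gcdB a b
  set g : ℤ := ((Int.gcd a b : ℕ) : ℤ) with hg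
  have hg0 : g ≠ 0 := by
    intro h0
    rw [h0, zero_mul] at ha hb
    apply hdet
    rw [ha, hb]; ring
  have huv : a' * u + b' * v = 1 := by
    apply mul_left_cancel₀ hg0
    linear_combination -hbez - ha * u - hb * v
  have key : #{p : X × X | p.1 ^ a * p.2 ^ c = 1 ∧ p.1 ^ b * p.2 ^ h = 1} =
      #{p : X × X | p.1 ^ g * p.2 ^ (c * u + h * v) = 1 ∧ p.2 ^ (a' * h - b' * c) = 1} := by
    congr 1
    ext ⟨x, y⟩
    simp only [mem_filter, mem_univ, true_and]
    constructor
    · rintro ⟨h1, h2⟩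
      constructor
      · calc x ^ g * y ^ (c * u + h * v) = (x ^ a * y ^ c) ^ u * (x ^ b * y ^ h) ^ v := by
              simp only [mul_zpow, ← zpow_mul]
              rw [hbez, zpow_add, zpow_add, mul_mul_mul_comm]
          _ = 1 := by simp [h1, h2]
      · calc y ^ (a' * h - b' * c) = (x ^ a * y ^ c) ^ (-b') * (x ^ b * y ^ h) ^ a' := by
              simp only [mul_zpow, ← zpow_mul]
              rw [mul_mul_mul_comm, ← zpow_add, ← zpow_add,
                show a * -b' + b * a' = 0 by linear_combination -b' * ha + a' * hb, zpow_zero,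
                one_mul]
              congr 1; ring
          _ = 1 := by simp [h1, h2]
    · rintro ⟨h1, h2⟩
      constructor
      · calc x ^ a * y ^ c =
              (x ^ g * y ^ (c * u + h * v)) ^ a' * (y ^ (a' * h - b' * c)) ^ (-v) := by
              simp only [mul_zpow, ← zpow_mul]
              rw [mul_assoc, ← zpow_add, ← ha]
              congr 2
              linear_combination -c * huv
          _ = 1 := by simp [h1, h2]
      · calc x ^ b * y ^ h =
              (x ^ g * y ^ (c * u + h * v)) ^ b' * (y ^ (a' * h - b' * c)) ^ u := by
              simp only [mul_zpow, ← zpow_mul]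
              rw [mul_assoc, ← zpow_add, ← hb]
              congr 2
              linear_combination -h * huv
          _ = 1 := by simp [h1, h2]
  rw [key, card_triangular]
  have hdet2 : g * (a' * h - b' * c) = a * h - b * c := by
    linear_combination -h * ha + c * hb
  rw [hdet2]
  -- the old and new entries generate the same ideal
  congr 2
  norm_cast
  refine Nat.dvd_left_iff_eq.1 fun t => ?_
  simp only [← Int.natCast_dvd_natCast, Int.dvd_coe_gcd_iff]
  constructor
  · rintro ⟨h1, h2, h3, h4⟩
    refine ⟨ha ▸ h1.mul_right _, hb ▸ h1.mul_right _, ?_, ?_, h4⟩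
    · rw [show c = (c * u + h * v) * a' + (a' * h - b' * c) * (-v) by
        linear_combination -c * huv]
      exact (h2.mul_right _).add (h3.mul_right _)
    · rw [show h = (c * u + h * v) * b' + (a' * h - b' * c) * u by
        linear_combination -h * huv]
      exact (h2.mul_right _).add (h3.mul_right _)
  · rintro ⟨h1, h2, h3, h4, h5⟩
    exact ⟨Int.dvd_coe_gcd h1 h2, (h3.mul_right _).add (h4.mul_right _),
      (h4.mul_left _).sub (h3.mul_left _), h5⟩

end Cyclic
/-! ### Orthogonality and point counts on tori -/

lemma sum_mul_sum_prod {α β : Type*} [Fintype α] [Fintype β] (f : α → ℂ) (g : β → ℂ) :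
    (∑ x, f x) * ∑ y, g y = ∑ p : α × β, f p.1 * g p.2 := by
  rw [sum_mul_sum, Fintype.sum_prod_type]

/-- Passage from monomials with natural exponents to Laurent monomials. -/
lemma monomial_split {G : Type*} [CommGroup G] (c x y : G) (a b a' b' : ℕ) :
    c * x ^ a * y ^ b =
      c * (x ^ ((a : ℤ) - a') * y ^ ((b : ℤ) - b')) * (x ^ a' * y ^ b') := by
  have h (z : G) (n n' : ℕ) : z ^ ((n : ℤ) - n') * z ^ n' = z ^ n := by
    rw [← zpow_natCast z n', ← zpow_add, sub_add_cancel, zpow_natCast]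
  rw [mul_assoc c, mul_assoc c, mul_mul_mul_comm, h, h]

section Characters
variable {F : Type*} [Field F] [Fintype F] [DecidableEq F]

noncomputable instance : Fintype (MulChar F ℂ) := Fintype.ofFinite _
noncomputable instance : DecidableEq (MulChar F ℂ) := Classical.decEq _

instance : IsCyclic (MulChar F ℂ) :=
  isCyclic_of_surjective (MulChar.mulEquiv_units F ℂ).some.symm
    (MulChar.mulEquiv_units F ℂ).some.symm.surjective

lemma sum_mulChar_apply (a : Fˣ) :
    ∑ χ : MulChar F ℂ, χ (a : F) = if a = 1 then (Fintype.card Fˣ : ℂ) else 0 := by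
  split_ifs with h
  · subst h
    simp [← Nat.card_eq_fintype_card, MulChar.card_eq_card_units_of_hasEnoughRootsOfUnity F ℂ]
  · obtain ⟨ψ, hψ⟩ := MulChar.exists_apply_ne_one_of_hasEnoughRootsOfUnity F ℂ
      (a := (a : F)) (by simpa using h)
    refine eq_zero_of_mul_eq_self_left hψ ?_
    rw [mul_sum, ← (Group.mulLeft_bijective ψ).sum_comp (fun χ : MulChar F ℂ => χ (a : F))]
    simp

lemma sum_units_apply (χ : MulChar F ℂ) :
    ∑ x : Fˣ, χ (x : F) = if χ = 1 then (Fintype.card Fˣ : ℂ) else 0 := by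
  split_ifs with h
  · subst h
    simp
  · obtain ⟨b, hb⟩ := MulChar.ne_one_iff.1 h
    refine eq_zero_of_mul_eq_self_left hb ?_
    rw [mul_sum, ← (Group.mulLeft_bijective b).sum_comp (fun x : Fˣ => χ (x : F))]
    simp

/-- The fibre of a power map on `Fˣ`, expanded into the characters trivial on its image. -/
lemma card_zpow_fiber (l : ℤ) (a : Fˣ) :
    (#{y : Fˣ | y ^ l = a} : ℂ) = ∑ χ : MulChar F ℂ with χ ^ l = 1, χ (a : F) := by
  have hm : (Fintype.card Fˣ : ℂ) ≠ 0 := by exact_mod_cast Fintype.card_ne_zero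
  apply mul_left_cancel₀ hm
  calc (Fintype.card Fˣ : ℂ) * #{y : Fˣ | y ^ l = a}
      = ∑ y : Fˣ, ∑ χ : MulChar F ℂ, χ ((a * y ^ (-l) : Fˣ) : F) := by
        simp_rw [sum_mulChar_apply, zpow_neg, mul_inv_eq_one, card_filter, eq_comm (a := a)]
        push_cast
        simp_rw [mul_sum, mul_ite, mul_one, mul_zero]
    _ = ∑ χ : MulChar F ℂ, χ (a : F) * ∑ y : Fˣ, (χ ^ (-l)) (y : F) := by
        rw [sum_comm]
        simp_rw [mul_sum, MulChar.zpow_apply_coe, Units.val_mul, map_mul]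
    _ = _ := by
        simp_rw [sum_units_apply, zpow_neg, inv_eq_one, sum_filter, mul_sum]
        refine sum_congr rfl fun χ _ => ?_
        split_ifs <;> ring

/-- The fibre of an endomorphism of the torus `(Fˣ)²`, expanded into the pairs of characters that
are trivial on its image. -/
lemma card_pair_fiber (b11 b12 b21 b22 : ℤ) (u v : Fˣ) :
    (#{p : Fˣ × Fˣ | p.1 ^ b11 * p.2 ^ b12 = u ∧ p.1 ^ b21 * p.2 ^ b22 = v} : ℂ) =
      ∑ χ : MulChar F ℂ × MulChar F ℂ with
        χ.1 ^ b11 * χ.2 ^ b21 = 1 ∧ χ.1 ^ b12 * χ.2 ^ b22 = 1, χ.1 (u : F) * χ.2 (v : F) := by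
  have hm : (Fintype.card Fˣ : ℂ) ≠ 0 := by exact_mod_cast Fintype.card_ne_zero
  apply mul_left_cancel₀ (mul_ne_zero hm hm)
  calc (Fintype.card Fˣ : ℂ) * Fintype.card Fˣ *
        #{p : Fˣ × Fˣ | p.1 ^ b11 * p.2 ^ b12 = u ∧ p.1 ^ b21 * p.2 ^ b22 = v}
      = ∑ p : Fˣ × Fˣ, (∑ χ : MulChar F ℂ, χ ((u * (p.1 ^ b11 * p.2 ^ b12)⁻¹ : Fˣ) : F)) *
          ∑ χ : MulChar F ℂ, χ ((v * (p.1 ^ b21 * p.2 ^ b22)⁻¹ : Fˣ) : F) := by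
        simp_rw [sum_mulChar_apply, mul_inv_eq_one, card_filter]
        push_cast
        rw [mul_sum]
        refine sum_congr rfl fun p _ => ?_
        simp only [eq_comm (a := u), eq_comm (a := v)]
        split_ifs <;> simp_all
    _ = ∑ χ : MulChar F ℂ × MulChar F ℂ, χ.1 (u : F) * χ.2 (v : F) *
          ((∑ x : Fˣ, (χ.1 ^ b11 * χ.2 ^ b21)⁻¹ (x : F)) *
            ∑ y : Fˣ, (χ.1 ^ b12 * χ.2 ^ b22)⁻¹ (y : F)) := by
        simp_rw [sum_mul_sum_prod, mul_sum]
        rw [sum_comm]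
        refine sum_congr rfl fun χ _ => sum_congr rfl fun p _ => ?_
        simp only [mul_inv, ← zpow_neg, MulChar.mul_apply, MulChar.zpow_apply_coe, Units.val_mul,
          map_mul]
        ring
    _ = _ := by
        simp_rw [sum_units_apply, inv_eq_one, sum_filter, mul_sum]
        refine sum_congr rfl fun χ _ => ?_
        split_ifs <;> simp_all; ring

lemma jacobiSum_eq_sum_units (χ ψ : MulChar F ℂ) :
    jacobiSum χ ψ = ∑ p : Fˣ × Fˣ with (p.1 : F) + p.2 = 1, χ (p.1 : F) * ψ (p.2 : F) := by
  rw [jacobiSum_eq_sum_sdiff]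
  symm
  refine sum_bij (fun p _ => (p.1 : F)) ?_ ?_ ?_ ?_
  · rintro ⟨u, v⟩ h
    simp only [mem_filter, mem_univ, true_and] at h
    simp only [mem_sdiff, mem_univ, true_and, mem_insert, mem_singleton, not_or]
    refine ⟨u.ne_zero, fun h1 => v.ne_zero ?_⟩
    simp [h1] at h
  · rintro ⟨u, v⟩ h ⟨u', v'⟩ h' heq
    simp only [mem_filter, mem_univ, true_and] at h h' heq
    ext
    · exact heq
    · rw [← heq, ← h] at h'
      exact (add_left_cancel h').symm
  · intro x hx
    simp only [mem_sdiff, mem_univ, true_and, mem_insert, mem_singleton, not_or] at hx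
    exact ⟨(Units.mk0 x hx.1, Units.mk0 (1 - x) (sub_ne_zero.2 (Ne.symm hx.2))), by simp, rfl⟩
  · rintro ⟨u, v⟩ h
    simp only [mem_filter, mem_univ, true_and] at h
    simp only [← h, add_sub_cancel_left]

/-- The number of points of a trinomial curve on the torus as a sum of Jacobi sums. -/
lemma card_curve (b11 b12 b21 b22 : ℤ) (s t : Fˣ) :
    (#{p : Fˣ × Fˣ | ((s * (p.1 ^ b11 * p.2 ^ b12) : Fˣ) : F) +
      ((t * (p.1 ^ b21 * p.2 ^ b22) : Fˣ) : F) = 1} : ℂ) =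
      ∑ χ : MulChar F ℂ × MulChar F ℂ with
        χ.1 ^ b11 * χ.2 ^ b21 = 1 ∧ χ.1 ^ b12 * χ.2 ^ b22 = 1,
        χ.1 ((s⁻¹ : Fˣ) : F) * χ.2 ((t⁻¹ : Fˣ) : F) * jacobiSum χ.1 χ.2 := by
  rw [card_eq_sum_card_fiberwise (t := ({w : Fˣ × Fˣ | (w.1 : F) + w.2 = 1} : Finset _))
    (f := fun p : Fˣ × Fˣ => (s * (p.1 ^ b11 * p.2 ^ b12), t * (p.1 ^ b21 * p.2 ^ b22)))
    (by intro p hp; simpa using hp)]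
  push_cast
  have : ∀ w ∈ ({w : Fˣ × Fˣ | (w.1 : F) + w.2 = 1} : Finset _),
      (#{p ∈ ({p : Fˣ × Fˣ | ((s * (p.1 ^ b11 * p.2 ^ b12) : Fˣ) : F) +
      ((t * (p.1 ^ b21 * p.2 ^ b22) : Fˣ) : F) = 1} : Finset _) |
        (s * (p.1 ^ b11 * p.2 ^ b12), t * (p.1 ^ b21 * p.2 ^ b22)) = w} : ℂ) =
      ∑ χ : MulChar F ℂ × MulChar F ℂ with
        χ.1 ^ b11 * χ.2 ^ b21 = 1 ∧ χ.1 ^ b12 * χ.2 ^ b22 = 1,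
        χ.1 ((s⁻¹ : Fˣ) : F) * χ.2 ((t⁻¹ : Fˣ) : F) * (χ.1 (w.1 : F) * χ.2 (w.2 : F)) := by
    rintro ⟨u, v⟩ hw
    simp only [mem_filter, mem_univ, true_and] at hw
    have h1 := card_pair_fiber b11 b12 b21 b22 (s⁻¹ * u) (t⁻¹ * v)
    convert h1 using 1
    · congr 2
      ext p
      simp only [mem_filter, mem_univ, true_and, Prod.mk.injEq, eq_inv_mul_iff_mul_eq]
      constructor
      · exact fun h => h.2
      · intro h
        refine ⟨?_, h⟩
        rw [h.1, h.2, hw]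
    · refine sum_congr rfl fun χ _ => ?_
      rw [Units.val_mul, Units.val_mul, map_mul, map_mul]
      ring
  push_cast at this
  rw [sum_congr rfl this, sum_comm]
  refine sum_congr rfl fun χ _ => ?_
  rw [jacobiSum_eq_sum_units, mul_sum]

/-! ### Evaluation and estimation of the character sums -/

/-- The sum over the characters killed by `d = gcd(a, b, q - 1)` at `ρ ^ i` is `D_d(i)`: it counts
the solutions of `y ^ d = ρ ^ i`. -/
lemma sum_torsion (ρ : Fˣ) (hρ : ∀ x : Fˣ, x ∈ Subgroup.zpowers ρ) (a b i : ℤ) :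
    ∑ χ : MulChar F ℂ with χ ^ a = 1 ∧ χ ^ b = 1, χ ((ρ ^ i : Fˣ) : F) =
      if ((Int.gcd a (Int.gcd b ((Fintype.card F : ℤ) - 1)) : ℕ) : ℤ) ∣ i then
        ((Int.gcd a (Int.gcd b ((Fintype.card F : ℤ) - 1)) : ℕ) : ℂ) else 0 := by
  set d := Int.gcd a (Int.gcd b ((Fintype.card F : ℤ) - 1)) with hd
  have hm : ((Fintype.card F : ℤ) - 1) = (Nat.card Fˣ : ℤ) := by
    rw [Nat.card_eq_fintype_card, Fintype.card_units, Nat.cast_sub Fintype.card_pos, Nat.cast_one]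
  have hX : Nat.card (MulChar F ℂ) = Nat.card Fˣ :=
    MulChar.card_eq_card_units_of_hasEnoughRootsOfUnity F ℂ
  have hfil : (univ.filter fun χ : MulChar F ℂ => χ ^ a = 1 ∧ χ ^ b = 1) =
      univ.filter fun χ : MulChar F ℂ => χ ^ (d : ℤ) = 1 := by
    ext χ
    simp only [mem_filter, mem_univ, true_and, ← orderOf_dvd_iff_zpow_eq_one]
    rw [hd, hm, Int.dvd_coe_gcd_iff, Int.dvd_coe_gcd_iff, ← hX, Int.natCast_dvd_natCast]
    simp [orderOf_dvd_card]
  have hdm : d ∣ Nat.card Fˣ := by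
    rw [← Int.natCast_dvd_natCast, ← hm]
    exact (Int.gcd_dvd_right ..).trans (Int.gcd_dvd_right ..)
  rw [hfil, ← card_zpow_fiber, card_zpow_eq, Int.natAbs_natCast, Nat.gcd_eq_right hdm]
  rw [Nat.cast_ite, Nat.cast_zero]
  refine if_congr ?_ rfl rfl
  obtain ⟨r, hr⟩ := hdm
  have hm0 : 0 < Nat.card Fˣ := Nat.card_pos
  have hd0 : 0 < d := Nat.pos_of_ne_zero (by rintro h; simp [h] at hr)
  have hr0 : 0 < r := Nat.pos_of_ne_zero (by rintro h; simp [h] at hr)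
  rw [Nat.div_eq_of_eq_mul_right hd0 hr, ← zpow_natCast, ← zpow_mul, ← orderOf_dvd_iff_zpow_eq_one,
    orderOf_eq_card_of_forall_mem_zpowers hρ, hr, Nat.cast_mul]
  exact mul_dvd_mul_iff_right (by exact_mod_cast hr0.ne')

lemma norm_mulChar_units (χ : MulChar F ℂ) (a : Fˣ) : ‖χ (a : F)‖ = 1 :=
  Complex.norm_eq_one_of_mem_rootsOfUnity (χ.apply_mem_rootsOfUnity a)

set_option linter.unusedSectionVars false in
lemma norm_jacobiSum {χ ψ : MulChar F ℂ} (h1 : χ ≠ 1) (h2 : ψ ≠ 1) (h3 : χ * ψ ≠ 1) :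
    ‖jacobiSum χ ψ‖ = Real.sqrt (Fintype.card F) := by
  have hc : ringChar ℂ ≠ ringChar F := by
    rw [ringChar.eq_zero]
    exact fun h => CharP.ringChar_ne_zero_of_finite F h.symm
  have h := jacobiSum_mul_jacobiSum_inv hc h1 h2 h3
  have hconj : jacobiSum χ⁻¹ ψ⁻¹ = starRingEnd ℂ (jacobiSum χ ψ) := by
    simp only [jacobiSum, map_sum, map_mul, ← MulChar.star_eq_inv, MulChar.star_apply,
      RCLike.star_def]
  rw [hconj, Complex.mul_conj, Complex.normSq_eq_norm_sq] at h
  have h' : ‖jacobiSum χ ψ‖ ^ 2 = (Fintype.card F : ℝ) := by exact_mod_cast h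
  rw [← h', Real.sqrt_sq (norm_nonneg _)]

lemma neg_one_eq_zpow (ρ : Fˣ) (hρ : ∀ x : Fˣ, x ∈ Subgroup.zpowers ρ) :
    (-1 : Fˣ) = ρ ^ (if Even (Fintype.card F) then (0 : ℤ) else ((Fintype.card F : ℤ) - 1) / 2) := by
  have hm : Fintype.card Fˣ + 1 = Fintype.card F := by
    rw [Fintype.card_units]; exact Nat.sub_add_cancel Fintype.card_pos
  have ho : orderOf ρ = Fintype.card Fˣ := by
    rw [orderOf_eq_card_of_forall_mem_zpowers hρ, Nat.card_eq_fintype_card]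
  split_ifs with h
  · have h2 := FiniteField.even_card_iff_char_two.2 (Nat.even_iff.1 h)
    have : CharP F 2 := ringChar.of_eq h2
    ext
    simp [CharTwo.neg_eq]
  · rw [Nat.not_even_iff_odd] at h
    obtain ⟨r, hr⟩ := h
    have hr2 : Fintype.card Fˣ = 2 * r := by omega
    have h0 : 0 < Fintype.card Fˣ := Fintype.card_pos
    rw [show ((Fintype.card F : ℤ) - 1) / 2 = (r : ℤ) by rw [hr]; push_cast; omega, zpow_natCast]
    have hsq : ((ρ ^ r : Fˣ) : F) ^ 2 = 1 := by
      rw [← Units.val_pow_eq_pow_val, ← pow_mul, mul_comm, ← hr2, pow_card_eq_one, Units.val_one]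
    rcases mul_self_eq_one_iff.1 ((sq _).symm.trans hsq) with h1 | h1
    · exfalso
      have : ρ ^ r = 1 := by ext; exact h1
      have := Nat.le_of_dvd (by omega) (orderOf_dvd_of_pow_eq_one this)
      omega
    · ext
      simpa using h1.symm

/-- Summation over the elements of `{p | P p ∧ Q p}` when `Q` is the range of an injection `ι`. -/
lemma sum_filter_param {α β M : Type*} [Fintype α] [Fintype β] [AddCommMonoid M]
    (ι : α → β) (hι : Function.Injective ι) (P Q : β → Prop) [DecidablePred P] [DecidablePred Q]
    (hQ : ∀ p, Q p ↔ ∃ x, ι x = p) (h : β → M) :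
    ∑ p with P p, (if Q p then h p else 0) = ∑ x with P (ι x), h (ι x) := by
  rw [← sum_filter, filter_filter]
  symm
  refine sum_bij (fun x _ => ι x) ?_ (fun x _ y _ hxy => hι hxy) ?_ (fun _ _ => rfl)
  · intro x hx
    simp only [mem_filter, mem_univ, true_and] at hx ⊢
    exact ⟨hx, (hQ _).2 ⟨x, rfl⟩⟩
  · intro p hp
    simp only [mem_filter, mem_univ, true_and] at hp
    obtain ⟨x, rfl⟩ := (hQ p).1 hp.2
    exact ⟨x, by simpa using hp.1, rfl⟩

/-- The contribution of one pair of characters to `N`, after subtracting the main terms: it vanishes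
on the three degenerate families and otherwise has absolute value `√q`. The corrections at `χ = 1`,
which lies in all three families, make up for the overcount. -/
lemma norm_term_le (s t : Fˣ) (χ : MulChar F ℂ × MulChar F ℂ) :
    ‖χ.1 (s : F) * χ.2 (t : F) * jacobiSum χ.1 χ.2 + (if χ.2 = 1 then χ.1 (s : F) else 0) +
      (if χ.1 = 1 then χ.2 (t : F) else 0) +
      (if χ.1 * χ.2 = 1 then χ.1 ((s * t⁻¹ * -1 : Fˣ) : F) else 0) -
      (if χ = 1 then (Fintype.card F + 1 : ℂ) else 0)‖ ≤
    (1 - (if χ.2 = 1 then 1 else 0) - (if χ.1 = 1 then 1 else 0) -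
      (if χ.1 * χ.2 = 1 then 1 else 0) + (if χ = 1 then 2 else 0)) *
      Real.sqrt (Fintype.card F) := by
  obtain ⟨χ, ψ⟩ := χ
  simp only [Prod.mk_eq_one]
  by_cases h1 : χ = 1
  · subst h1
    by_cases h2 : ψ = 1
    · subst h2
      simp only [jacobiSum_one_one, MulChar.one_apply_coe, mul_one, one_mul, and_self, if_true]
      ring_nf
      simp
    · simp [h2, jacobiSum_one_nontrivial h2]
  · by_cases h2 : ψ = 1
    · subst h2
      simp [h1, jacobiSum_comm χ, jacobiSum_one_nontrivial h1]
    · by_cases h3 : χ * ψ = 1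
      · obtain rfl : ψ = χ⁻¹ := (inv_eq_of_mul_eq_one_right h3).symm
        have hprod : χ ((s * t⁻¹ * -1 : Fˣ) : F) = χ (s : F) * χ⁻¹ (t : F) * χ (-1) := by
          simp only [Units.val_mul, map_mul, MulChar.inv_apply', Units.val_inv_eq_inv_val,
            Units.val_neg, Units.val_one]
        simp only [hprod]
        simp [h1, jacobiSum_nontrivial_inv h1]
      · simp [h1, h2, h3, norm_jacobiSum h1 h2 h3, norm_mulChar_units]

/-- The bound for the curve in Laurent form. -/
lemma core_bound (ρ : Fˣ) (hρ : ∀ x : Fˣ, x ∈ Subgroup.zpowers ρ) (b11 b12 b21 b22 i j w : ℤ)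
    (hdet : b11 * b22 - b12 * b21 ≠ 0) (hw : (-1 : Fˣ) = ρ ^ w) (d e f k : ℕ)
    (hd : d = Int.gcd b11 (Int.gcd b12 ((Fintype.card F : ℤ) - 1)))
    (he : e = Int.gcd b21 (Int.gcd b22 ((Fintype.card F : ℤ) - 1)))
    (hf : f = Int.gcd (b11 - b21) (Int.gcd (b12 - b22) ((Fintype.card F : ℤ) - 1)))
    (hk : k = Int.gcd (((Fintype.card F : ℤ) - 1) * (Int.gcd d (Int.gcd e f) : ℕ))
      (b11 * b22 - b12 * b21)) :
    ‖(#{p : Fˣ × Fˣ | ((ρ ^ i * (p.1 ^ b11 * p.2 ^ b12) : Fˣ) : F) +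
      ((ρ ^ j * (p.1 ^ b21 * p.2 ^ b22) : Fˣ) : F) = 1} : ℂ) - (Fintype.card F + 1)
      + (if (d : ℤ) ∣ i then (d : ℂ) else 0) + (if (e : ℤ) ∣ j then (e : ℂ) else 0)
      + (if (f : ℤ) ∣ i - j + w then (f : ℂ) else 0)‖ ≤
    ((k : ℝ) - d - e - f + 2) * Real.sqrt (Fintype.card F) := by
  set P : MulChar F ℂ × MulChar F ℂ → Prop := fun χ =>
    χ.1 ^ b11 * χ.2 ^ b21 = 1 ∧ χ.1 ^ b12 * χ.2 ^ b22 = 1 with hP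
  have hP1 : P 1 := by simp [hP]
  have hm : ((Fintype.card F : ℤ) - 1) = (Nat.card (MulChar F ℂ) : ℤ) := by
    rw [MulChar.card_eq_card_units_of_hasEnoughRootsOfUnity F ℂ, Nat.card_eq_fintype_card,
      Fintype.card_units, Nat.cast_sub Fintype.card_pos, Nat.cast_one]
  -- the three degenerate families, each parametrised by a single character
  have S1 (n : ℤ) : ∑ χ with P χ, (if χ.2 = 1 then χ.1 ((ρ ^ n : Fˣ) : F) else 0) =
      if (d : ℤ) ∣ n then (d : ℂ) else 0 := by
    rw [sum_filter_param (fun χ : MulChar F ℂ => (χ, (1 : MulChar F ℂ)))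
      (fun _ _ h => (Prod.mk.inj h).1) P (fun χ => χ.2 = 1)
      (fun p => ⟨fun h => ⟨p.1, Prod.ext rfl h.symm⟩, by rintro ⟨x, rfl⟩; rfl⟩)
      (fun χ => χ.1 ((ρ ^ n : Fˣ) : F))]
    simp only [hP, one_zpow, mul_one]
    rw [sum_torsion ρ hρ, ← hd]
  have S2 (n : ℤ) : ∑ χ with P χ, (if χ.1 = 1 then χ.2 ((ρ ^ n : Fˣ) : F) else 0) =
      if (e : ℤ) ∣ n then (e : ℂ) else 0 := by
    rw [sum_filter_param (fun χ : MulChar F ℂ => ((1 : MulChar F ℂ), χ))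
      (fun _ _ h => (Prod.mk.inj h).2) P (fun χ => χ.1 = 1)
      (fun p => ⟨fun h => ⟨p.2, Prod.ext h.symm rfl⟩, by rintro ⟨x, rfl⟩; rfl⟩)
      (fun χ => χ.2 ((ρ ^ n : Fˣ) : F))]
    simp only [hP, one_zpow, one_mul]
    rw [sum_torsion ρ hρ, ← he]
  have S3 (n : ℤ) : ∑ χ with P χ, (if χ.1 * χ.2 = 1 then χ.1 ((ρ ^ n : Fˣ) : F) else 0) =
      if (f : ℤ) ∣ n then (f : ℂ) else 0 := by
    rw [sum_filter_param (fun χ : MulChar F ℂ => (χ, χ⁻¹))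
      (fun _ _ h => (Prod.mk.inj h).1) P (fun χ => χ.1 * χ.2 = 1)
      (fun p => ⟨fun h => ⟨p.1, Prod.ext rfl (inv_eq_of_mul_eq_one_right h)⟩,
        by rintro ⟨x, rfl⟩; simp⟩)
      (fun χ => χ.1 ((ρ ^ n : Fˣ) : F))]
    simp only [hP, inv_zpow', ← zpow_add, ← sub_eq_add_neg]
    rw [sum_torsion ρ hρ, ← hf]
  have S0 {M : Type} [AddCommMonoid M] (c : M) : ∑ χ with P χ, (if χ = 1 then c else 0) = c := by
    rw [sum_ite_eq', if_pos (by simpa using hP1)]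
  have hcard : #{χ | P χ} = k := by
    rw [card_pair b11 b12 b21 b22 hdet, hk, hm]
    congr 3
    refine Nat.dvd_left_iff_eq.1 fun t => ?_
    rw [hd, he, hf, hm]
    simp only [← Int.natCast_dvd_natCast, Int.dvd_coe_gcd_iff]
    constructor
    · rintro ⟨h1, h2, h3, h4, h5⟩
      exact ⟨⟨h1, h2, h5⟩, ⟨h3, h4, h5⟩, h1.sub h3, h2.sub h4, h5⟩
    · rintro ⟨⟨h1, h2, h5⟩, ⟨h3, h4, -⟩, -⟩
      exact ⟨h1, h2, h3, h4, h5⟩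
  have C1 : ∑ χ with P χ, (if χ.2 = 1 then (1 : ℝ) else 0) = d := by
    have := S1 0
    simp only [zpow_zero, Units.val_one, map_one, dvd_zero, if_true] at this
    exact_mod_cast this
  have C2 : ∑ χ with P χ, (if χ.1 = 1 then (1 : ℝ) else 0) = e := by
    have := S2 0
    simp only [zpow_zero, Units.val_one, map_one, dvd_zero, if_true] at this
    exact_mod_cast this
  have C3 : ∑ χ with P χ, (if χ.1 * χ.2 = 1 then (1 : ℝ) else 0) = f := by
    have := S3 0
    simp only [zpow_zero, Units.val_one, map_one, dvd_zero, if_true] at this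
    exact_mod_cast this
  have hw' : (ρ ^ i)⁻¹ * ((ρ ^ j)⁻¹)⁻¹ * -1 = ρ ^ (-(i - j + w)) := by
    have : (-1 : Fˣ) = ρ ^ (-w) := by rw [zpow_neg, ← hw]; simp
    rw [this, inv_inv, ← zpow_neg, ← zpow_add, ← zpow_add]
    congr 1; ring
  have T1 := S1 (-i)
  have T2 := S2 (-j)
  have T3 := S3 (-(i - j + w))
  simp only [dvd_neg, zpow_neg ρ i, zpow_neg ρ j, ← hw'] at T1 T2 T3
  rw [card_curve, ← T1, ← T2, ← T3, ← S0 (Fintype.card F + 1 : ℂ)]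
  calc _ = ‖∑ χ with P χ, (χ.1 (((ρ ^ i)⁻¹ : Fˣ) : F) * χ.2 (((ρ ^ j)⁻¹ : Fˣ) : F) *
        jacobiSum χ.1 χ.2 + (if χ.2 = 1 then χ.1 (((ρ ^ i)⁻¹ : Fˣ) : F) else 0) +
        (if χ.1 = 1 then χ.2 (((ρ ^ j)⁻¹ : Fˣ) : F) else 0) +
        (if χ.1 * χ.2 = 1 then χ.1 (((ρ ^ i)⁻¹ * ((ρ ^ j)⁻¹)⁻¹ * -1 : Fˣ) : F) else 0) -
        (if χ = 1 then (Fintype.card F + 1 : ℂ) else 0))‖ := by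
        simp only [sum_add_distrib, sum_sub_distrib]
        congr 1
        ring
    _ ≤ ∑ χ with P χ, (1 - (if χ.2 = 1 then 1 else 0) - (if χ.1 = 1 then 1 else 0) -
          (if χ.1 * χ.2 = 1 then 1 else 0) + (if χ = 1 then 2 else 0)) *
          Real.sqrt (Fintype.card F) :=
        norm_sum_le_of_le _ fun χ _ => norm_term_le _ _ χ
    _ = _ := by
        rw [← sum_mul]
        simp only [sum_add_distrib, sum_sub_distrib]
        rw [C1, C2, C3, S0, sum_const, hcard]
        simp

end Characters

/-- The bound |N_{ij}| ≤ 2·g̃·√q, where g̃ = (k - d - e - f + 2)/2. -/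
theorem trinomial_bound_two_gtilde {p n q : ℕ} (hp : p.Prime) (hn : 0 < n) (hq : q = p ^ n)
    {F : Type*} [Field F] [Fintype F] (hF : Fintype.card F = q)
    (ρ : Fˣ) (hρ : ∀ x : Fˣ, x ∈ Subgroup.zpowers ρ)
    (a11 a12 a21 a22 a31 a32 : ℕ)
    (b11 b12 b21 b22 : ℤ)
    (hb11 : b11 = (a11 : ℤ) - (a31 : ℤ)) (hb12 : b12 = (a12 : ℤ) - (a32 : ℤ))
    (hb21 : b21 = (a21 : ℤ) - (a31 : ℤ)) (hb22 : b22 = (a22 : ℤ) - (a32 : ℤ))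
    (hdet : b11 * b22 - b12 * b21 ≠ 0)
    (d e f k w : ℤ)
    (hd : d = Int.gcd b11 (Int.gcd b12 ((q : ℤ) - 1)))
    (he : e = Int.gcd b21 (Int.gcd b22 ((q : ℤ) - 1)))
    (hf : f = Int.gcd (b11 - b21) (Int.gcd (b12 - b22) ((q : ℤ) - 1)))
    (hk : k = Int.gcd (((q : ℤ) - 1) * (Int.gcd d (Int.gcd e f) : ℕ))
      (b11 * b22 - b12 * b21))
    (hw : w = if Even q then 0 else ((q : ℤ) - 1) / 2)
    (D : ℤ → ℤ → ℤ) (hD : ∀ ℓ i : ℤ, D ℓ i = if ℓ ∣ i then ℓ else 0)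
    (C : ℤ → ℤ → ℕ)
    (hC : ∀ i j : ℤ, C i j = Nat.card {xy : Fˣ × Fˣ //
      ((ρ ^ i : Fˣ) : F) * (xy.1 : F) ^ a11 * (xy.2 : F) ^ a12
        + ((ρ ^ j : Fˣ) : F) * (xy.1 : F) ^ a21 * (xy.2 : F) ^ a22
        = (xy.1 : F) ^ a31 * (xy.2 : F) ^ a32})
    (N : ℤ → ℤ → ℤ)
    (hN : ∀ i j : ℤ, N i j = (C i j : ℤ) - ((q : ℤ) + 1) + D d i + D e j + D f (i - j + w)) :
    ∀ i j : ℤ, (|N i j| : ℝ) ≤ 2 * (((k : ℝ) - (d : ℝ) - (e : ℝ) - (f : ℝ) + 2) / 2) * Real.sqrt q := by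
  classical
  subst hF
  intro i j
  have hwρ : (-1 : Fˣ) = ρ ^ w := by rw [hw]; exact neg_one_eq_zpow ρ hρ
  obtain ⟨d, rfl⟩ : ∃ d' : ℕ, d = d' := ⟨_, hd⟩
  obtain ⟨e, rfl⟩ : ∃ e' : ℕ, e = e' := ⟨_, he⟩
  obtain ⟨f, rfl⟩ : ∃ f' : ℕ, f = f' := ⟨_, hf⟩
  obtain ⟨k, rfl⟩ : ∃ k' : ℕ, k = k' := ⟨_, hk⟩
  have hcore := core_bound ρ hρ b11 b12 b21 b22 i j w hdet hwρ d e f k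
    (by exact_mod_cast hd) (by exact_mod_cast he) (by exact_mod_cast hf) (by exact_mod_cast hk)
  have hcount : C i j = #{p : Fˣ × Fˣ | ((ρ ^ i * (p.1 ^ b11 * p.2 ^ b12) : Fˣ) : F) +
      ((ρ ^ j * (p.1 ^ b21 * p.2 ^ b22) : Fˣ) : F) = 1} := by
    rw [hC, Nat.card_eq_fintype_card, Fintype.card_subtype]
    congr 1
    ext ⟨x, y⟩
    simp only [mem_filter, mem_univ, true_and]
    -- the original equation is the Laurent form multiplied by its right-hand monomial
    have hne : ((x ^ a31 * y ^ a32 : Fˣ) : F) ≠ 0 := Units.ne_zero _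
    have e1 := congrArg Units.val (monomial_split (ρ ^ i) x y a11 a12 a31 a32)
    have e2 := congrArg Units.val (monomial_split (ρ ^ j) x y a21 a22 a31 a32)
    rw [← hb11, ← hb12, Units.val_mul (_ * (_ * _)), Units.val_mul, Units.val_mul,
      Units.val_pow_eq_pow_val, Units.val_pow_eq_pow_val] at e1
    rw [← hb21, ← hb22, Units.val_mul (_ * (_ * _)), Units.val_mul, Units.val_mul,
      Units.val_pow_eq_pow_val, Units.val_pow_eq_pow_val] at e2
    rw [e1, e2, ← add_mul, ← Units.val_pow_eq_pow_val x a31, ← Units.val_pow_eq_pow_val y a32,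
      ← Units.val_mul, mul_eq_right₀ hne]
  have hNC : (N i j : ℂ) = (#{p : Fˣ × Fˣ | ((ρ ^ i * (p.1 ^ b11 * p.2 ^ b12) : Fˣ) : F) +
      ((ρ ^ j * (p.1 ^ b21 * p.2 ^ b22) : Fˣ) : F) = 1} : ℂ) - (Fintype.card F + 1)
      + (if (d : ℤ) ∣ i then (d : ℂ) else 0) + (if (e : ℤ) ∣ j then (e : ℂ) else 0)
      + (if (f : ℤ) ∣ i - j + w then (f : ℂ) else 0) := by
    rw [hN, hD, hD, hD, hcount]
    push_cast
    rfl
  rw [← hNC, Complex.norm_intCast] at hcore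
  push_cast
  calc _ ≤ _ := hcore
    _ = _ := by ring
end

section
/- Let G be a finite abelian group and let g1, g2, g3 ∈ G be such that each of the pairs {g1,g2}, {g1,g3}, {g2,g3} generates G. Let K ≥ 0 be a real number and let N : G → ℝ be a function such that: (i) for every g ∈ G, the sum of N over the coset g + ⟨g1⟩ is 0; (ii) for every g ∈ G, the sum of N over the coset g + ⟨g2⟩ is 0; (iii) for every g ∈ G, the sum of N over the coset g + ⟨g3⟩ is 0; and (iv) the sum over a ∈ G of N(a)^2 equals K. Then for every g ∈ G, |N(g)| ≤ √( K·(1 + 2/|G| − 1/n1 − 1/n2 − 1/n3) ), where n1, n2, n3 are the orders of g1, g2, g3 in G. -/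
/-!
The conditions say that `N` is orthogonal to the indicator of every coset of `Hᵢ = ⟨gᵢ⟩`, hence
also to constants.  So `N g = ⟪N, φ⟫` for
`φ = δ_g - ∑ᵢ 1_{g + Hᵢ} / nᵢ + 2 / |G|`,
and Cauchy–Schwarz gives `N g ^ 2 ≤ K * ‖φ‖²`.  Since `Hᵢ + Hⱼ = G` for `i ≠ j`, the product
formula `|Hᵢ| |Hⱼ| = |G| |Hᵢ ∩ Hⱼ|` (`card_mul_card_of_sup_eq_top`) evaluates the cross terms,
and `‖φ‖² = 1 + 2/|G| - ∑ᵢ 1/nᵢ`.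
-/

open scoped Classical

section

variable {G : Type*} [AddCommGroup G]

/-- Indicator function of the coset `g + H`. -/
noncomputable def cosetInd (H : AddSubgroup G) (g a : G) : ℝ := if a - g ∈ H then 1 else 0

lemma cosetInd_mul_self (H : AddSubgroup G) (g a : G) :
    cosetInd H g a * cosetInd H g a = cosetInd H g a := by
  simp [cosetInd]

lemma cosetInd_mul (H L : AddSubgroup G) (g a : G) :
    cosetInd H g a * cosetInd L g a = cosetInd (H ⊓ L) g a := by
  by_cases h : a - g ∈ H <;> by_cases h' : a - g ∈ L <;>
    simp [cosetInd, h, h', AddSubgroup.mem_inf]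

variable [Fintype G]

lemma card_mul_card_of_sup_eq_top (H L : AddSubgroup G) (h : H ⊔ L = ⊤) :
    Nat.card H * Nat.card L = Nat.card G * Nat.card (H ⊓ L : AddSubgroup G) := by
  have e1 : H.relIndex L = H.index := by
    rw [← AddSubgroup.relIndex_sup_left, h, AddSubgroup.relIndex_top_right]
  have e2 : Nat.card (H ⊓ L : AddSubgroup G) * (H ⊓ L).relIndex L = Nat.card L := by
    have := AddSubgroup.relIndex_mul_relIndex ⊥ (H ⊓ L) L bot_le inf_le_right
    simpa [AddSubgroup.relIndex_bot_left] using this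
  rw [AddSubgroup.inf_relIndex_right, e1] at e2
  rw [← e2, ← H.card_mul_index]
  ring

lemma sum_cosetInd (H : AddSubgroup G) (g : G) : ∑ a, cosetInd H g a = Nat.card H := by
  unfold cosetInd
  rw [← Equiv.sum_comp (Equiv.addRight g)]
  simp [Nat.card_eq_fintype_card, Fintype.card_subtype]

/-- Normalized indicators of cosets through `g` of two subgroups with sum `G` have inner product
`1 / |G|`. -/
lemma inner_cosetInd (x y : G) (h : AddSubgroup.closure {x, y} = ⊤) (g : G) :
    ∑ a, cosetInd (.zmultiples x) g a / addOrderOf x * (cosetInd (.zmultiples y) g a / addOrderOf y)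
      = 1 / (Fintype.card G : ℝ) := by
  have hs : AddSubgroup.zmultiples x ⊔ AddSubgroup.zmultiples y = ⊤ := by
    rw [← h, AddSubgroup.zmultiples_eq_closure, AddSubgroup.zmultiples_eq_closure,
      ← AddSubgroup.closure_union, Set.singleton_union]
  have hc := card_mul_card_of_sup_eq_top _ _ hs
  rw [Nat.card_zmultiples, Nat.card_zmultiples, Nat.card_eq_fintype_card (α := G)] at hc
  have hc' : (addOrderOf x : ℝ) * addOrderOf y = Fintype.card G *
      Nat.card (AddSubgroup.zmultiples x ⊓ AddSubgroup.zmultiples y : AddSubgroup G) := by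
    exact_mod_cast hc
  have hx : (addOrderOf x : ℝ) ≠ 0 := by exact_mod_cast (addOrderOf_pos x).ne'
  have hy : (addOrderOf y : ℝ) ≠ 0 := by exact_mod_cast (addOrderOf_pos y).ne'
  have hG : (Fintype.card G : ℝ) ≠ 0 := by exact_mod_cast Fintype.card_ne_zero
  simp_rw [div_mul_div_comm, cosetInd_mul]
  rw [← Finset.sum_div, sum_cosetInd, div_eq_div_iff (mul_ne_zero hx hy) hG, hc']
  ring

lemma sum_normalized (x g : G) : ∑ a, cosetInd (.zmultiples x) g a / addOrderOf x = 1 := by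
  have hx : (addOrderOf x : ℝ) ≠ 0 := by exact_mod_cast (addOrderOf_pos x).ne'
  rw [← Finset.sum_div, sum_cosetInd, Nat.card_zmultiples, div_self hx]

lemma sum_normalized_sq (x g : G) :
    ∑ a, cosetInd (.zmultiples x) g a / addOrderOf x * (cosetInd (.zmultiples x) g a / addOrderOf x)
      = 1 / (addOrderOf x : ℝ) := by
  simp_rw [div_mul_div_comm, cosetInd_mul_self, ← div_div]
  rw [← Finset.sum_div, sum_normalized]

lemma sum_mul_normalized (x : G) (N : G → ℝ)
    (h : ∀ g : G, ∑ a : G, (if a - g ∈ AddSubgroup.zmultiples x then N a else 0) = 0) (g : G) :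
    ∑ a, N a * (cosetInd (.zmultiples x) g a / addOrderOf x) = 0 := by
  simp_rw [← mul_div_assoc]
  rw [← Finset.sum_div]
  simp [cosetInd, h]

lemma sum_eq_zero_of_coset (x : G) (N : G → ℝ)
    (h : ∀ g : G, ∑ a : G, (if a - g ∈ AddSubgroup.zmultiples x then N a else 0) = 0) :
    ∑ a, N a = 0 := by
  have hx : (addOrderOf x : ℝ) ≠ 0 := by exact_mod_cast (addOrderOf_pos x).ne'
  -- Summing the coset sums over all `g` counts every value `N a` exactly `addOrderOf x` times.
  have key : ∑ g, ∑ a, N a * cosetInd (.zmultiples x) g a = 0 := by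
    simp [cosetInd, h]
  have symm (g a : G) : cosetInd (.zmultiples x) g a = cosetInd (.zmultiples x) a g := by
    unfold cosetInd
    rw [← neg_sub g a, neg_mem_iff]
  rw [Finset.sum_comm] at key
  simp_rw [symm, ← Finset.mul_sum, sum_cosetInd, Nat.card_zmultiples] at key
  rw [← Finset.sum_mul] at key
  exact (mul_eq_zero.mp key).resolve_right hx

end

/-- Let `G` be a finite abelian group and `g₁, g₂, g₃ ∈ G` such that each pair of them
generates `G`.  If `N : G → ℝ` sums to zero on every coset of `⟨g₁⟩`, `⟨g₂⟩`, `⟨g₃⟩`, and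
`∑_{a ∈ G} N(a)² = K ≥ 0`, then `|N(g)| ≤ √(K·(1 + 2/|G| - 1/n₁ - 1/n₂ - 1/n₃))` for all
`g ∈ G`, where `nᵢ` is the order of `gᵢ`. -/
theorem lagrange_bound {G : Type*} [AddCommGroup G] [Fintype G] (g₁ g₂ g₃ : G)
    (h12 : AddSubgroup.closure {g₁, g₂} = ⊤)
    (h13 : AddSubgroup.closure {g₁, g₃} = ⊤)
    (h23 : AddSubgroup.closure {g₂, g₃} = ⊤)
    (K : ℝ) (hK : 0 ≤ K) (N : G → ℝ)
    (h1 : ∀ g : G, ∑ a : G, (if a - g ∈ AddSubgroup.zmultiples g₁ then N a else 0) = 0)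
    (h2 : ∀ g : G, ∑ a : G, (if a - g ∈ AddSubgroup.zmultiples g₂ then N a else 0) = 0)
    (h3 : ∀ g : G, ∑ a : G, (if a - g ∈ AddSubgroup.zmultiples g₃ then N a else 0) = 0)
    (hsq : ∑ a : G, (N a) ^ 2 = K) :
    ∀ g : G, |N g| ≤ Real.sqrt (K * (1 + 2 / (Fintype.card G : ℝ)
      - 1 / (addOrderOf g₁ : ℝ) - 1 / (addOrderOf g₂ : ℝ) - 1 / (addOrderOf g₃ : ℝ))) := by
  intro g
  have hG : (Fintype.card G : ℝ) ≠ 0 := by exact_mod_cast Fintype.card_ne_zero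
  have i12 := inner_cosetInd g₁ g₂ h12 g
  have i13 := inner_cosetInd g₁ g₃ h13 g
  have i23 := inner_cosetInd g₂ g₃ h23 g
  have s1 := sum_normalized g₁ g
  have s2 := sum_normalized g₂ g
  have s3 := sum_normalized g₃ g
  have q1 := sum_normalized_sq g₁ g
  have q2 := sum_normalized_sq g₂ g
  have q3 := sum_normalized_sq g₃ g
  have n1 := sum_mul_normalized g₁ N h1 g
  have n2 := sum_mul_normalized g₂ N h2 g
  have n3 := sum_mul_normalized g₃ N h3 g
  have n0 := sum_eq_zero_of_coset g₁ N h1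
  have v (x : G) : cosetInd (.zmultiples x) g g / addOrderOf x = 1 / (addOrderOf x : ℝ) := by
    simp [cosetInd]
  set e₁ : G → ℝ := fun a => cosetInd (.zmultiples g₁) g a / addOrderOf g₁
  set e₂ : G → ℝ := fun a => cosetInd (.zmultiples g₂) g a / addOrderOf g₂
  set e₃ : G → ℝ := fun a => cosetInd (.zmultiples g₃) g a / addOrderOf g₃
  have v1 : e₁ g = 1 / (addOrderOf g₁ : ℝ) := v g₁
  have v2 : e₂ g = 1 / (addOrderOf g₂ : ℝ) := v g₂
  have v3 : e₃ g = 1 / (addOrderOf g₃ : ℝ) := v g₃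
  let d : G → ℝ := fun a => if a = g then 1 else 0
  have hd (f : G → ℝ) : ∑ a, f a * d a = f g := by simp [d]
  let c : ℝ := 2 / Fintype.card G
  let φ : G → ℝ := fun a => d a - e₁ a - e₂ a - e₃ a + c
  have hN : ∑ a, N a * φ a = N g := by
    have : ∀ a, N a * φ a = N a * d a - N a * e₁ a - N a * e₂ a - N a * e₃ a + N a * c := by
      intro a; simp only [φ]; ring
    simp_rw [this, Finset.sum_add_distrib, Finset.sum_sub_distrib, ← Finset.sum_mul]
    rw [hd, n0]
    linarith
  have hφ : ∑ a, φ a ^ 2 = 1 + 2 / (Fintype.card G : ℝ)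
      - 1 / (addOrderOf g₁ : ℝ) - 1 / (addOrderOf g₂ : ℝ) - 1 / (addOrderOf g₃ : ℝ) := by
    have : ∀ a, φ a ^ 2 = (d a * d a - 2 * (e₁ a * d a) - 2 * (e₂ a * d a) - 2 * (e₃ a * d a))
        + (e₁ a * e₁ a + e₂ a * e₂ a + e₃ a * e₃ a)
        + (2 * (e₁ a * e₂ a) + 2 * (e₁ a * e₃ a) + 2 * (e₂ a * e₃ a))
        + 2 * c * (d a - e₁ a - e₂ a - e₃ a) + c ^ 2 := by
      intro a; simp only [φ]; ring
    have hdg : d g = 1 := by simp [d]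
    have hds : ∑ a, d a = 1 := by simp [d]
    simp_rw [this, Finset.sum_add_distrib, ← Finset.mul_sum, Finset.sum_sub_distrib,
      ← Finset.mul_sum, hd]
    simp only [Finset.sum_const, Finset.card_univ, nsmul_eq_mul]
    rw [i12, i13, i23, s1, s2, s3, q1, q2, q3, hdg, hds, v1, v2, v3]
    simp only [c]
    field_simp
    ring
  apply Real.abs_le_sqrt
  rw [← hN, ← hsq, ← hφ]
  exact Finset.sum_mul_sq_le_sq_mul_sq _ _ _
end

section
/- Let p be a prime with p ≡ 1 (mod 3), let ρ be a generator of F_p^*, and for integers i, j let C*_{ij} = {(x,y) ∈ (F_p^*)^2 : ρ^i·x^3 + ρ^j·y^3 = 1}. Set u = |C*_{00}| − p + 8 and v = |C*_{01}| − p + 2. Then u^2 + u·v + v^2 = 3p, 9 divides u + 2v, and u ≡ 1 (mod 3). -/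
/-!
Fix a primitive cube root of unity `ω ∈ ℂ` and the cubic character `χ` of `𝔽_p` with `χ ρ = ω`.
For a unit `b`, the number of units `y` with `b y³ = t` is `1(t) + χ(b)⁻¹ χ(t) + χ(b) χ⁻¹(t)`,
where `1` is the trivial character, vanishing at `0` (`card_cube_fiber`). Summing the product of two
such counts over `t + (1 - t) = 1` writes `|C*_{0j}|` as a combination of the nine Jacobi sums of the
characters `1, χ, χ⁻¹` (`card_curve`). All of them except `J = J(χ, χ)` and `J(χ⁻¹, χ⁻¹) = conj J`
are elementary, and the result is `u = J + conj J` and `v = ω⁻¹ J + ω conj J`.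

The congruence `J ≡ -1 mod (ω - 1)²` and `(ω - 1)² = -3ω` give `J = a + b ω` with `a ≡ -1` and `b ≡ 0`
modulo `3` (`jacobiSum_cubic`), so `u = 2a - b` and `v = 2b - a`. Hence `u + 2v = 3b`, `u ≡ 1 mod 3`,
and `u² + uv + v² = 3(a² - ab + b²) = 3 J conj J = 3p`.
-/

open Finset

/-- The unit group being cyclic with generator `ρ`, a unit on which the cubic character with
`χ ρ = ω` is trivial is a cube. -/
lemma exists_cube_of_char_eq_one {p : ℕ} [Fact p.Prime] {ρ : (ZMod p)ˣ}
    (hρ : ∀ x : (ZMod p)ˣ, x ∈ Subgroup.zpowers ρ) {ω : ℂ} (hω : IsPrimitiveRoot ω 3)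
    {χ : MulChar (ZMod p) ℂ} (hχ : χ ρ = ω) {t : (ZMod p)ˣ} (ht : χ t = 1) :
    ∃ s : (ZMod p)ˣ, s ^ 3 = t := by
  obtain ⟨n, rfl⟩ := (mem_powers_iff_mem_zpowers).2 (hρ t)
  simp only [Units.val_pow_eq_pow_val, map_pow, hχ] at ht
  obtain ⟨k, rfl⟩ := (hω.pow_eq_one_iff_dvd n).1 ht
  exact ⟨ρ ^ k, by simp only [← pow_mul, mul_comm]⟩

lemma card_cube_roots_one {p : ℕ} [Fact p.Prime] (h3 : p % 3 = 1) :
    #{y : (ZMod p)ˣ | y ^ 3 = 1} = 3 := by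
  have h := IsCyclic.card_powMonoidHom_ker (G := (ZMod p)ˣ) 3
  have hp := (Fact.out : p.Prime).one_lt
  rw [Nat.card_eq_fintype_card (α := (ZMod p)ˣ), ZMod.card_units,
    Nat.gcd_eq_right (by omega)] at h
  rw [← Fintype.card_subtype, ← Nat.card_eq_fintype_card]
  exact h

lemma sq_add_self_add_one_eq_zero {ω : ℂ} (hω : IsPrimitiveRoot ω 3) : ω ^ 2 + ω + 1 = 0 := by
  have := hω.geom_sum_eq_zero (by norm_num)
  simp only [sum_range_succ, range_zero, sum_empty] at this
  linear_combination this

lemma card_cube_fiber {p : ℕ} [Fact p.Prime] (h3 : p % 3 = 1) {ρ : (ZMod p)ˣ}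
    (hρ : ∀ x : (ZMod p)ˣ, x ∈ Subgroup.zpowers ρ) {ω : ℂ} (hω : IsPrimitiveRoot ω 3)
    {χ : MulChar (ZMod p) ℂ} (hχ : χ ρ = ω) (h1 : χ ^ 3 = 1) (b : (ZMod p)ˣ) (t : ZMod p) :
    (#{y : (ZMod p)ˣ | (b : ZMod p) * (y : ZMod p) ^ 3 = t} : ℂ) =
      (1 : MulChar (ZMod p) ℂ) t + (χ b)⁻¹ * χ t + χ b * χ⁻¹ t := by
  rcases eq_or_ne t 0 with rfl | ht
  · rw [filter_false_of_mem]
    · simp [MulChar.map_zero]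
    · intro y _
      rw [← Units.val_pow_eq_pow_val, ← Units.val_mul]
      exact Units.ne_zero _
  obtain ⟨t, rfl⟩ := (isUnit_iff_ne_zero.2 ht)
  have cube (x : (ZMod p)ˣ) : χ x ^ 3 = 1 := by
    rw [← MulChar.pow_apply_coe, h1, MulChar.one_apply_coe]
  have hset : #{y : (ZMod p)ˣ | (b : ZMod p) * (y : ZMod p) ^ 3 = t} =
      #{y : (ZMod p)ˣ | y ^ 3 = b⁻¹ * t} := by
    congr 1
    ext y
    simp only [mem_filter, mem_univ, true_and, ← Units.val_pow_eq_pow_val, ← Units.val_mul,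
      Units.val_inj, eq_inv_mul_iff_mul_eq]
  have hb0 : χ b ≠ 0 := fun h ↦ by simpa [h] using cube b
  have ht0 : χ t ≠ 0 := fun h ↦ by simpa [h] using cube t
  have hq : χ (b⁻¹ * t : (ZMod p)ˣ) = (χ b)⁻¹ * χ t := by
    rw [eq_inv_mul_iff_mul_eq₀ hb0, ← map_mul, ← Units.val_mul, mul_inv_cancel_left]
  have hinv : χ⁻¹ (t : ZMod p) = (χ t)⁻¹ := by rw [MulChar.inv_apply_eq_inv']
  rw [hset, MulChar.one_apply_coe, hinv]
  -- The right-hand side is `1 + z + z⁻¹` for the cube root of unity `z = χ (b⁻¹ t)`.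
  have hz : (1 : ℂ) + (χ b)⁻¹ * χ t + χ b * (χ t)⁻¹ =
      1 + χ (b⁻¹ * t : (ZMod p)ˣ) + (χ (b⁻¹ * t : (ZMod p)ˣ)) ^ 2 := by
    have h2 : χ b * (χ t)⁻¹ = ((χ b)⁻¹ * χ t) ^ 2 := by
      field_simp
      rw [cube, cube]
    rw [hq, h2]
  rw [hz]
  generalize b⁻¹ * t = s
  by_cases hs : χ s = 1
  · obtain ⟨r, rfl⟩ := exists_cube_of_char_eq_one hρ hω hχ hs
    have : #{y : (ZMod p)ˣ | y ^ 3 = r ^ 3} = #{y : (ZMod p)ˣ | y ^ 3 = 1} := by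
      refine card_bij' (fun y _ ↦ y * r⁻¹) (fun y _ ↦ y * r) ?_ ?_ ?_ ?_ <;>
        simp +contextual [mul_pow]
    rw [this, card_cube_roots_one h3, hs]
    norm_num
  · rw [filter_false_of_mem]
    · have := cube s
      have h0 : (χ s - 1) * (1 + χ s + χ s ^ 2) = 0 := by linear_combination this
      simpa using ((mul_eq_zero.1 h0).resolve_left (sub_ne_zero.2 hs)).symm
    · rintro y _ rfl
      exact hs (by rw [Units.val_pow_eq_pow_val, map_pow, cube])

lemma card_curve_s16 {p : ℕ} [Fact p.Prime] (h3 : p % 3 = 1) {ρ : (ZMod p)ˣ}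
    (hρ : ∀ x : (ZMod p)ˣ, x ∈ Subgroup.zpowers ρ) {ω : ℂ} (hω : IsPrimitiveRoot ω 3)
    {χ : MulChar (ZMod p) ℂ} (hχ : χ ρ = ω) (h1 : χ ^ 3 = 1) (b : (ZMod p)ˣ) :
    (Nat.card {xy : (ZMod p)ˣ × (ZMod p)ˣ //
      (xy.1 : ZMod p) ^ 3 + (b : ZMod p) * (xy.2 : ZMod p) ^ 3 = 1} : ℂ) =
    p - 4 - 2 * ((χ b)⁻¹ + χ b) + (χ b)⁻¹ * jacobiSum χ χ + χ b * jacobiSum χ⁻¹ χ⁻¹ := by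
  have hne : χ ≠ 1 := by
    rintro rfl
    rw [MulChar.one_apply_coe] at hχ
    exact hω.ne_one (by norm_num) hχ.symm
  have hneg : χ (-1) = 1 := by
    have h : χ (-1) ^ 3 = 1 := by
      have := MulChar.pow_apply_coe χ 3 (-1)
      rw [h1, MulChar.one_apply_coe] at this
      simpa using this.symm
    rw [← map_pow] at h
    rwa [show (-1 : ZMod p) ^ 3 = -1 by ring] at h
  -- Fiber the solutions over the value `t = x³`.
  have hcount : (Nat.card {xy : (ZMod p)ˣ × (ZMod p)ˣ //
      (xy.1 : ZMod p) ^ 3 + (b : ZMod p) * (xy.2 : ZMod p) ^ 3 = 1}) =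
      ∑ t : ZMod p, #{x : (ZMod p)ˣ | ((1 : (ZMod p)ˣ) : ZMod p) * (x : ZMod p) ^ 3 = t} *
        #{y : (ZMod p)ˣ | (b : ZMod p) * (y : ZMod p) ^ 3 = 1 - t} := by
    rw [Nat.card_eq_fintype_card, Fintype.card_subtype,
      card_eq_sum_card_fiberwise (f := fun xy ↦ (xy.1 : ZMod p) ^ 3) (t := univ) (by simp)]
    refine sum_congr rfl fun t _ ↦ ?_
    rw [← card_product]
    congr 1
    ext ⟨x, y⟩
    simp only [mem_filter, mem_univ, true_and, mem_product, Units.val_one, one_mul]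
    constructor
    · rintro ⟨h, rfl⟩
      exact ⟨rfl, by linear_combination h⟩
    · rintro ⟨rfl, h⟩
      exact ⟨by linear_combination h, rfl⟩
  have e11 : jacobiSum (1 : MulChar (ZMod p) ℂ) 1 = p - 2 := by
    rw [jacobiSum_one_one, ZMod.card]
  have e1c := jacobiSum_one_nontrivial hne
  have e1i := jacobiSum_one_nontrivial (inv_ne_one.2 hne)
  have ec1 := jacobiSum_comm χ (1 : MulChar (ZMod p) ℂ)
  have ei1 := jacobiSum_comm χ⁻¹ 1
  have eci := jacobiSum_nontrivial_inv hne
  have eic := jacobiSum_comm χ⁻¹ χ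
  rw [e1c] at ec1
  rw [e1i] at ei1
  rw [hneg] at eci
  rw [eci] at eic
  rw [hcount]
  push_cast
  have key : ∀ t : ZMod p,
      (#{x : (ZMod p)ˣ | (1 : ZMod p) * (x : ZMod p) ^ 3 = t} : ℂ) *
        (#{y : (ZMod p)ˣ | (b : ZMod p) * (y : ZMod p) ^ 3 = 1 - t} : ℂ) =
      ((1 : MulChar (ZMod p) ℂ) t + χ t + χ⁻¹ t) *
      ((1 : MulChar (ZMod p) ℂ) (1 - t) + (χ b)⁻¹ * χ (1 - t) + χ b * χ⁻¹ (1 - t)) := by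
    intro t
    have hx := card_cube_fiber h3 hρ hω hχ h1 1 t
    rw [Units.val_one, map_one, inv_one, one_mul, one_mul] at hx
    rw [hx, card_cube_fiber h3 hρ hω hχ h1 b (1 - t)]
  rw [sum_congr rfl fun t _ ↦ key t]
  have expand : ∑ t : ZMod p, ((1 : MulChar (ZMod p) ℂ) t + χ t + χ⁻¹ t) *
      ((1 : MulChar (ZMod p) ℂ) (1 - t) + (χ b)⁻¹ * χ (1 - t) + χ b * χ⁻¹ (1 - t)) =
      (jacobiSum (1 : MulChar (ZMod p) ℂ) 1 + jacobiSum χ 1 + jacobiSum χ⁻¹ 1) +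
      (χ b)⁻¹ * (jacobiSum 1 χ + jacobiSum χ χ + jacobiSum χ⁻¹ χ) +
      χ b * (jacobiSum 1 χ⁻¹ + jacobiSum χ χ⁻¹ + jacobiSum χ⁻¹ χ⁻¹) := by
    simp only [jacobiSum, mul_sum, ← sum_add_distrib]
    exact sum_congr rfl fun t _ ↦ by ring
  rw [expand, e11, e1c, e1i, ec1, ei1, eci, eic]
  ring

/-- The cubic Jacobi sum is primary: the coefficients are `a = 3 n - 1` and `b = 3 (n - m)` when
`J(χ, χ) = -1 + (m + n ω) (ω - 1)²`. -/
lemma jacobiSum_cubic {p : ℕ} [Fact p.Prime] (h3 : p % 3 = 1) {ω : ℂ} (hω : IsPrimitiveRoot ω 3)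
    {χ : MulChar (ZMod p) ℂ} (h1 : χ ^ 3 = 1) :
    ∃ m n : ℤ, jacobiSum χ χ = (3 * n - 1) + 3 * (n - m) * ω := by
  have hs := sq_add_self_add_one_eq_zero hω
  have hp := (Fact.out : p.Prime).one_lt
  obtain ⟨z, hz, hJ⟩ := exists_jacobiSum_eq_neg_one_add (by norm_num) h1 h1
    (by rw [ZMod.card]; omega) hω
  have hzm : ∃ m n : ℤ, z = m + n * ω := by
    clear hJ
    induction hz using Algebra.adjoin_induction with
    | mem x hx => exact ⟨0, 1, by simpa using hx⟩
    | algebraMap r => exact ⟨r, 0, by simp⟩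
    | add x y _ _ hx hy =>
      obtain ⟨a, b, rfl⟩ := hx
      obtain ⟨c, d, rfl⟩ := hy
      exact ⟨a + c, b + d, by push_cast; ring⟩
    | mul x y _ _ hx hy =>
      obtain ⟨a, b, rfl⟩ := hx
      obtain ⟨c, d, rfl⟩ := hy
      exact ⟨a * c - b * d, a * d + b * c - b * d, by
        push_cast; linear_combination (b * d : ℂ) * hs⟩
  obtain ⟨m, n, rfl⟩ := hzm
  exact ⟨m, n, by rw [hJ]; linear_combination (m + n * ω - 3 * n) * hs⟩

/-- For a prime `p ≡ 1 (mod 3)` with `ρ` a generator of `𝔽_p^*`, setting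
`u = |C*₀₀| - p + 8` and `v = |C*₀₁| - p + 2` for the curves
`C*_{ij} = {(x,y) ∈ (𝔽_p^*)² : ρ^i·x³ + ρ^j·y³ = 1}`, one has `u² + uv + v² = 3p`,
`9 ∣ u + 2v`, and `u ≡ 1 (mod 3)`. -/
theorem gauss_curve_uv (p : ℕ) [Fact p.Prime] (h3 : p % 3 = 1)
    (ρ : (ZMod p)ˣ) (hρ : ∀ x : (ZMod p)ˣ, x ∈ Subgroup.zpowers ρ)
    (C : ℤ → ℤ → ℕ)
    (hC : ∀ i j : ℤ, C i j = Nat.card {xy : (ZMod p)ˣ × (ZMod p)ˣ //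
      ((ρ ^ i : (ZMod p)ˣ) : ZMod p) * (xy.1 : ZMod p) ^ 3
        + ((ρ ^ j : (ZMod p)ˣ) : ZMod p) * (xy.2 : ZMod p) ^ 3 = 1})
    (u v : ℤ) (hu : u = (C 0 0 : ℤ) - p + 8) (hv : v = (C 0 1 : ℤ) - p + 2) :
    u ^ 2 + u * v + v ^ 2 = 3 * p ∧ (9 : ℤ) ∣ u + 2 * v ∧ u % 3 = 1 := by
  have hp := (Fact.out : p.Prime).one_lt
  obtain ⟨ω, hω⟩ : ∃ ω : ℂ, IsPrimitiveRoot ω 3 := ⟨_, Complex.isPrimitiveRoot_exp 3 (by norm_num)⟩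
  have hs := sq_add_self_add_one_eq_zero hω
  have hω3 := hω.pow_eq_one
  have hmem : (hω.isUnit (by norm_num)).unit ∈ rootsOfUnity (Fintype.card (ZMod p)ˣ) ℂ := by
    rw [mem_rootsOfUnity, Units.ext_iff]
    simp only [Units.val_pow_eq_pow_val, IsUnit.unit_spec, Units.val_one]
    rw [hω.pow_eq_one_iff_dvd, ZMod.card_units]
    omega
  obtain ⟨χ, hχ⟩ : ∃ χ : MulChar (ZMod p) ℂ, χ ρ = ω :=
    ⟨MulChar.ofRootOfUnity hmem hρ, by rw [MulChar.ofRootOfUnity_spec, IsUnit.unit_spec]⟩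
  have h1 : χ ^ 3 = 1 := by
    rw [MulChar.eq_iff hρ, MulChar.pow_apply_coe, hχ, MulChar.one_apply_coe, hω3]
  have hne : χ ≠ 1 := by
    rintro rfl
    rw [MulChar.one_apply_coe] at hχ
    exact hω.ne_one (by norm_num) hχ.symm
  have hsq : χ * χ ≠ 1 := by
    intro h
    apply hne
    rw [← h1, pow_succ, pow_two, h, one_mul]
  have hωinv : ω⁻¹ = ω ^ 2 := by
    exact inv_eq_of_mul_eq_one_left (by linear_combination hω3)
  -- The second sum is the complex conjugate of the first.
  have hconj : jacobiSum χ⁻¹ χ⁻¹ = starRingEnd ℂ (jacobiSum χ χ) := by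
    rw [← jacobiSum_ringHomComp, ← MulChar.star_eq_inv]
    rfl
  have hωconj : starRingEnd ℂ ω = ω ^ 2 := by
    rw [← hωinv]
    exact (Complex.inv_eq_conj (Complex.norm_eq_one_of_pow_eq_one hω3 (by norm_num))).symm
  obtain ⟨m, n, hJ⟩ := jacobiSum_cubic h3 hω h1
  have hJ' : jacobiSum χ⁻¹ χ⁻¹ = (3 * n - 1) + 3 * (n - m) * ω ^ 2 := by
    rw [hconj, hJ]
    simp [hωconj, Complex.conj_ofNat]
  have hprod := jacobiSum_mul_jacobiSum_inv (F' := ℂ)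
    (by rw [ringChar.eq_zero, ZMod.ringChar_zmod_n]; omega) hne hne hsq
  rw [hJ, hJ', ZMod.card] at hprod
  have c0 := card_curve_s16 h3 hρ hω hχ h1 1
  have c1 := card_curve_s16 h3 hρ hω hχ h1 ρ
  rw [Units.val_one, map_one, inv_one, hJ, hJ'] at c0
  rw [hχ, hωinv, hJ, hJ'] at c1
  have hC0 := hC 0 0
  have hC1 := hC 0 1
  simp only [zpow_zero, zpow_one, Units.val_one, one_mul] at hC0 hC1 c0
  rw [← hC0] at c0
  rw [← hC1] at c1
  have hu' : u = 2 * (3 * n - 1) - 3 * (n - m) := by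
    have : (u : ℂ) = 2 * (3 * n - 1) - 3 * (n - m) := by
      rw [hu]; push_cast; rw [c0]
      linear_combination 3 * (n - m : ℂ) * hs
    exact_mod_cast this
  have hv' : v = 2 * (3 * (n - m)) - (3 * n - 1) := by
    have : (v : ℂ) = 2 * (3 * (n - m)) - (3 * n - 1) := by
      rw [hv]; push_cast; rw [c1]
      linear_combination (3 * n - 1 - 2 : ℂ) * hs + 6 * (n - m : ℂ) * hω3
    exact_mod_cast this
  have hnorm : (3 * n - 1) ^ 2 - (3 * n - 1) * (3 * (n - m)) + (3 * (n - m)) ^ 2 = (p : ℤ) := by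
    have : ((3 * n - 1) ^ 2 - (3 * n - 1) * (3 * (n - m)) + (3 * (n - m)) ^ 2 : ℂ) = p := by
      rw [← hprod]
      linear_combination -(3 * n - 1 : ℂ) * (3 * (n - m)) * hs - (3 * (n - m)) ^ 2 * hω3
    exact_mod_cast this
  refine ⟨?_, ?_, ?_⟩
  · rw [hu', hv', ← hnorm]; ring
  · exact ⟨n - m, by rw [hu', hv']; ring⟩
  · omega
end

section
/- Let q be an odd prime power with q ≡ 3 (mod 4), and let ρ be a generator of F_q^*. Then for all integers i, j, the number of pairs (x,y) ∈ (F_q^*)^2 with ρ^i·x^3 + ρ^j·y^2 = x equals q − 1 − D_2(i), where D_2(i) = 2 if 2 divides i and 0 otherwise. -/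
/-!
Let `χ` be the quadratic character of `F`, and write `a = ρ^i`, `b = ρ^j`. For fixed `x` the number
of units `y` with `b y² = x - a x³` is `χ (b⁻¹ (x - a x³))`, plus `1` if `x - a x³ ≠ 0`
(`card_units_mul_sq_eq`). As `q ≡ 3 (mod 4)`, `χ (-1) = -1`, so the first summand is an odd function
of `x` and its sum over all units vanishes. The second summand contributes `q - 1` minus the number
of units `x` with `a x² = 1`; by the same lemma this number is `χ (a⁻¹) + 1`, which is `2` or `0`
according to the parity of `i`, since the generator `ρ` is not a square.
-/

lemma card_units_mul_sq_eq {F : Type*} [Field F] [Fintype F] [DecidableEq F]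
    (h2 : ringChar F ≠ 2) (b : Fˣ) (g : F) :
    (Nat.card {y : Fˣ // (b : F) * (y : F) ^ 2 = g} : ℤ)
      = quadraticChar F ((b : F)⁻¹ * g) + if g = 0 then 0 else 1 := by
  have hb : (b : F) ≠ 0 := b.ne_zero
  by_cases hg : g = 0
  · subst hg
    have : IsEmpty {y : Fˣ // (b : F) * (y : F) ^ 2 = 0} :=
      ⟨fun y => mul_ne_zero hb (pow_ne_zero 2 y.1.ne_zero) y.2⟩
    simp
  · rw [if_neg hg, ← quadraticChar_card_sqrts h2, ← Nat.card_eq_card_toFinset]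
    congr 1
    refine Nat.card_congr
      { toFun := fun y => ⟨(y.1 : F), ?_⟩
        invFun := fun y => ⟨Units.mk0 y.1 ?_, ?_⟩
        left_inv := fun y => by ext; rfl
        right_inv := fun y => rfl }
    · have := y.2
      simp only [Set.mem_ofPred_eq, ← this]
      field_simp
    · rintro h
      have := y.2
      simp [h, hg] at this
    · have := y.2
      simp only [Set.mem_ofPred_eq] at this
      simp only [Units.val_mk0, this]
      field_simp

/-- If `-1` is not a square, the parity of the exponent decides whether a power of a generator is a
square: `-1` is a power of the generator, so the generator is not a square either. -/
lemma quadraticChar_inv_zpow {F : Type*} [Field F] [Fintype F] [DecidableEq F]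
    (hm : quadraticChar F (-1) = -1)
    (ρ : Fˣ) (hρ : ∀ x : Fˣ, x ∈ Subgroup.zpowers ρ) (i : ℤ) :
    quadraticChar F (((ρ ^ i : Fˣ) : F)⁻¹) + 1 = if (2 : ℤ) ∣ i then 2 else 0 := by
  have hsq : ∀ k : ℤ, quadraticChar F (((ρ ^ k : Fˣ) : F) ^ 2) = 1 := fun k =>
    quadraticChar_sq_one' (Units.ne_zero _)
  have heven : ∀ k : ℤ, Even k → quadraticChar F ((ρ ^ k : Fˣ) : F) = 1 := by
    rintro k ⟨m, rfl⟩
    rw [zpow_add, Units.val_mul, ← sq, hsq]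
  have hodd' : ∀ k : ℤ, Odd k →
      quadraticChar F ((ρ ^ k : Fˣ) : F) = quadraticChar F (ρ : F) := by
    rintro k ⟨m, rfl⟩
    rw [zpow_add, Units.val_mul, map_mul, heven _ (even_two_mul m), zpow_one, one_mul]
  have hgen : quadraticChar F (ρ : F) = -1 := by
    obtain ⟨k, hk⟩ := Subgroup.mem_zpowers_iff.1 (hρ (-1))
    have hk' : quadraticChar F ((ρ ^ k : Fˣ) : F) = -1 := by rw [hk]; simpa using hm
    rcases Int.even_or_odd k with h | h
    · rw [heven k h] at hk'
      norm_num at hk'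
    · rw [← hodd' k h, hk']
  rw [← Units.val_inv_eq_inv_val, ← zpow_neg]
  rcases Int.even_or_odd i with h | h
  · rw [heven _ h.neg, if_pos h.two_dvd]
    norm_num
  · rw [hodd' _ h.neg, hgen, if_neg (by rwa [← even_iff_two_dvd, Int.not_even_iff_odd])]
    norm_num

/-- For an odd prime power `q ≡ 3 (mod 4)` and `ρ` a generator of `𝔽_q^*`, the number of
pairs `(x,y) ∈ (𝔽_q^*)²` with `ρ^i·x³ + ρ^j·y² = x` is `q - 1 - D₂(i)`. -/
theorem curve_x3_y2_x_three_mod_four (q : ℕ) (hq : IsPrimePow q) (hq4 : q % 4 = 3)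
    {F : Type*} [Field F] [Fintype F] (hF : Fintype.card F = q)
    (ρ : Fˣ) (hρ : ∀ x : Fˣ, x ∈ Subgroup.zpowers ρ) :
    ∀ i j : ℤ,
      (Nat.card {xy : Fˣ × Fˣ //
        ((ρ ^ i : Fˣ) : F) * (xy.1 : F) ^ 3 + ((ρ ^ j : Fˣ) : F) * (xy.2 : F) ^ 2
          = (xy.1 : F)} : ℤ)
        = (q : ℤ) - 1 - (if (2 : ℤ) ∣ i then 2 else 0) := by
  classical
  intro i j
  have h2 : ringChar F ≠ 2 := by
    intro h
    have := FiniteField.even_card_of_char_two h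
    omega
  have hm : quadraticChar F (-1) = -1 := by
    rw [quadraticChar_neg_one h2, hF]
    exact ZMod.χ₄_nat_three_mod_four hq4
  rw [← quadraticChar_inv_zpow hm ρ hρ i]
  generalize ρ ^ i = a
  generalize ρ ^ j = b
  let f : Fˣ → F := fun x => (x : F) - (a : F) * (x : F) ^ 3
  have hfib : (Nat.card {xy : Fˣ × Fˣ //
        (a : F) * (xy.1 : F) ^ 3 + (b : F) * (xy.2 : F) ^ 2 = (xy.1 : F)})
      = ∑ x : Fˣ, Nat.card {y : Fˣ // (b : F) * (y : F) ^ 2 = f x} := by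
    rw [← Nat.card_sigma]
    refine Nat.card_congr
      { toFun := fun p => ⟨p.1.1, p.1.2, by simp only [f]; linear_combination p.2⟩
        invFun := fun p => ⟨(p.1, p.2.1), by
          have := p.2.2
          simp only [f] at this
          linear_combination this⟩
        left_inv := fun p => rfl
        right_inv := fun p => rfl }
  have hodd : ∑ x : Fˣ, quadraticChar F ((b : F)⁻¹ * f x) = 0 := by
    have h := Equiv.sum_comp (Equiv.neg Fˣ) fun x => quadraticChar F ((b : F)⁻¹ * f x)
    have hneg : ∀ x : Fˣ, quadraticChar F ((b : F)⁻¹ * f (-x))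
        = -quadraticChar F ((b : F)⁻¹ * f x) := by
      intro x
      have : (b : F)⁻¹ * f (-x) = -1 * ((b : F)⁻¹ * f x) := by
        simp only [f, Units.val_neg]
        ring
      rw [this, map_mul, hm, neg_one_mul]
    simp only [Equiv.neg_apply, hneg, Finset.sum_neg_distrib] at h
    linarith
  have hzero : ∀ x : Fˣ, f x = 0 ↔ (a : F) * (x : F) ^ 2 = 1 := by
    intro x
    have : f x = (x : F) * (1 - (a : F) * (x : F) ^ 2) := by simp only [f]; ring
    rw [this, mul_eq_zero, or_iff_right x.ne_zero, sub_eq_zero, eq_comm]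
  have hroots := card_units_mul_sq_eq h2 a 1
  rw [mul_one, if_neg one_ne_zero, Nat.card_eq_fintype_card, Fintype.card_subtype] at hroots
  have hcount : ∑ x : Fˣ, (if f x = 0 then (0 : ℤ) else 1)
      = (q : ℤ) - 1 - (quadraticChar F ((a : F)⁻¹) + 1) := by
    have hone : ∀ x : Fˣ, (if f x = 0 then (0 : ℤ) else 1)
        = 1 - if (a : F) * (x : F) ^ 2 = 1 then 1 else 0 := by
      intro x
      simp only [hzero]
      split_ifs <;> norm_num
    have hcard : (Fintype.card Fˣ : ℤ) = (q : ℤ) - 1 := by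
      rw [Fintype.card_units, hF]
      have : 1 ≤ q := hq.one_lt.le
      push_cast [this]
      ring
    simp only [hone, Finset.sum_sub_distrib, Finset.sum_boole]
    rw [← hroots, ← hcard]
    simp
  rw [hfib, Nat.cast_sum]
  simp only [card_units_mul_sq_eq h2, Finset.sum_add_distrib]
  rw [hodd, hcount, zero_add]
end

section
/- Let p be an odd prime with p ≡ 2 (mod 3), let q = p^{2n} for some n ≥ 1, and let ρ be a generator of F_q^*. For integers i, j let C*_{ij} = {(x,y) ∈ (F_q^*)^2 : ρ^i·x^3 + ρ^j·y^2 = 1} and define N_{ij} = |C*_{ij}| − q + D_3(i) + D_2(j). Then for all integers i, j, N_{ij} ∈ {p^n, −p^n, 2p^n, −2p^n}; in particular N_{ij} ≠ 0 for all i, j, and there exist i, j with |N_{ij}| = 2p^n. -/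
/-!
Write `a = ρ^i`, `b = ρ^j`, and let `χ`, `ψ` be complex characters of `F` of exact orders `3` and
`2`. For `k ∈ {2, 3}` the number of units `x` with `a x^k = u` is the sum over the `k` characters of
exponent `k` of their values at `a⁻¹ u` (`card_mul_pow_eq`), so the number of points on
`a x³ + b y² = 1` with nonzero coordinates is a combination of the six Jacobi sums
`J(χ^m, ψ^r)` (`card_curve_eq_jacobiSum`). Those in which one of the characters is trivial contribute
exactly `q - D₃(i) - D₂(j)`, so that
`N_{ij} = ψ(b)⁻¹ (χ(a)⁻¹ J(χ, ψ) + χ(a)⁻² J(χ⁻¹, ψ))`.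

Since `p ≡ -1` modulo `3` and modulo `2`, the characters satisfy `χ^p = χ⁻¹` and `ψ^p = ψ⁻¹ = ψ`, and
the substitution `x ↦ x^p` gives `J(χ⁻¹, ψ) = J(χ, ψ)` (`jacobiSum_inv_inv_of_frobenius`). With
`J(χ, ψ) J(χ⁻¹, ψ⁻¹) = q = p^{2n}` this forces `J(χ, ψ) = ±p^n`. Finally `ψ(b) = ±1`, and
`χ(a)⁻¹ + χ(a)⁻² = D₃(i) - 1` is `2` or `-1`.
-/

open Finset

lemma geom_sum_zpow_primitiveRoot {ζ : ℂ} {k : ℕ} (hζ : IsPrimitiveRoot ζ k) (t : ℤ) :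
    ∑ m ∈ range k, (ζ ^ t) ^ m = if (k : ℤ) ∣ t then (k : ℂ) else 0 := by
  split_ifs with h
  · rw [(hζ.zpow_eq_one_iff_dvd t).2 h]; simp
  · have h1 : ζ ^ t ≠ 1 := fun h' => h ((hζ.zpow_eq_one_iff_dvd t).1 h')
    rw [geom_sum_eq h1, ← zpow_natCast, ← zpow_mul, mul_comm t, zpow_mul, zpow_natCast,
      hζ.pow_eq_one]
    simp

section

variable {F : Type*} [Field F] {ρ : Fˣ}

lemma mulChar_zpow (χ : MulChar F ℂ) (u : Fˣ) (t : ℤ) :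
    χ ((u ^ t : Fˣ) : F) = χ u ^ t := by
  have h := congrArg Units.val (map_zpow (MulChar.equivToUnitHom χ) u t)
  rwa [Units.val_zpow_eq_zpow_val, MulChar.coe_equivToUnitHom, MulChar.coe_equivToUnitHom] at h

lemma mulChar_pow_eq_one (hρ : ∀ x : Fˣ, x ∈ Subgroup.zpowers ρ) {k : ℕ} {χ : MulChar F ℂ}
    (hχ : IsPrimitiveRoot (χ ρ) k) : χ ^ k = 1 := by
  rw [MulChar.eq_iff hρ, MulChar.pow_apply_coe, hχ.pow_eq_one, MulChar.one_apply_coe]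

variable [Fintype F]

lemma orderOf_generator (hρ : ∀ x : Fˣ, x ∈ Subgroup.zpowers ρ) :
    orderOf ρ = Fintype.card F - 1 := by
  classical
  rw [orderOf_eq_card_of_forall_mem_zpowers hρ, Nat.card_eq_fintype_card, Fintype.card_units]

lemma exists_mulChar_primitive (hρ : ∀ x : Fˣ, x ∈ Subgroup.zpowers ρ) {k : ℕ} (hk0 : k ≠ 0)
    (hk : k ∣ Fintype.card F - 1) :
    ∃ χ : MulChar F ℂ, IsPrimitiveRoot (χ ρ) k := by
  classical
  have hζ := Complex.isPrimitiveRoot_exp k hk0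
  let ζ' : ℂˣ := (hζ.isUnit hk0).unit
  have h' : ζ' ∈ rootsOfUnity (Fintype.card Fˣ) ℂ :=
    (mem_rootsOfUnity _ _).2 <| Units.ext_iff.mpr <|
      (hζ.pow_eq_one_iff_dvd _).mpr <| Fintype.card_units (α := F) ▸ hk
  refine ⟨MulChar.ofRootOfUnity h' hρ, ?_⟩
  rw [MulChar.ofRootOfUnity_spec]
  exact hζ

/-- In the cyclic group `Fˣ`, whose order is a multiple of `k`, the element `ρ^t` has exactly `k`
`k`-th roots when `k ∣ t` and none otherwise. -/
lemma card_pow_eq_zpow (hρ : ∀ x : Fˣ, x ∈ Subgroup.zpowers ρ) [DecidableEq F] {k : ℕ}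
    (hk0 : 0 < k) (hk : k ∣ Fintype.card F - 1) (t : ℤ) :
    #{x : Fˣ | x ^ k = ρ ^ t} = if (k : ℤ) ∣ t then k else 0 := by
  obtain ⟨d, hd⟩ := hk
  have hq : 0 < Fintype.card F - 1 := Nat.sub_pos_of_lt Fintype.one_lt_card
  have hprim : IsPrimitiveRoot (ρ : F) (Fintype.card F - 1) := by
    rw [← orderOf_generator hρ, IsPrimitiveRoot.coe_units_iff]
    exact IsPrimitiveRoot.orderOf ρ
  have hζ : IsPrimitiveRoot ((ρ : F) ^ d) k := hprim.pow hq (by rw [hd, mul_comm])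
  split_ifs with h
  · obtain ⟨s, rfl⟩ := h
    have hv : (((ρ ^ s : Fˣ) : F)) ^ k = ((ρ ^ ((k : ℤ) * s) : Fˣ) : F) := by
      rw [← Units.val_pow_eq_pow_val, ← zpow_natCast, ← zpow_mul, mul_comm]
    have hne : ((ρ ^ ((k : ℤ) * s) : Fˣ) : F) ≠ 0 := Units.ne_zero _
    have hc := hζ.card_nthRoots ((ρ ^ ((k : ℤ) * s) : Fˣ) : F)
    rw [if_pos ⟨_, hv⟩] at hc
    have hnd := hζ.nthRoots_nodup hne
    refine Eq.trans ?_ ((Multiset.toFinset_card_of_nodup hnd).trans hc)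
    refine Finset.card_bij (fun x _ => (x : F)) ?_ ?_ ?_
    · intro x hx
      simp only [mem_filter, mem_univ, true_and] at hx
      rw [Multiset.mem_toFinset, Polynomial.mem_nthRoots hk0, ← hx, Units.val_pow_eq_pow_val]
    · intro x _ y _ hxy
      exact Units.ext hxy
    · intro y hy
      rw [Multiset.mem_toFinset, Polynomial.mem_nthRoots hk0] at hy
      have hy0 : y ≠ 0 := by
        rintro rfl
        rw [zero_pow hk0.ne'] at hy
        exact hne hy.symm
      exact ⟨Units.mk0 y hy0, by
        simpa only [mem_filter, mem_univ, true_and, Units.ext_iff, Units.val_pow_eq_pow_val,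
          Units.val_mk0] using hy, rfl⟩
  · rw [Finset.card_eq_zero, Finset.filter_eq_empty_iff]
    rintro x - hx
    obtain ⟨s, rfl⟩ := Subgroup.mem_zpowers_iff.1 (hρ x)
    rw [← zpow_natCast, ← zpow_mul, zpow_eq_zpow_iff_modEq, orderOf_generator hρ, hd] at hx
    apply h
    have h1 : (k : ℤ) ∣ t - s * k :=
      dvd_trans (Dvd.intro _ (by push_cast; rfl)) hx.dvd
    simpa using dvd_add h1 (Dvd.intro_left s rfl)

/-- The number of units `x` with `a x^k = u`, as a sum of the `k` characters of exponent `k`. -/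
lemma card_mul_pow_eq (hρ : ∀ x : Fˣ, x ∈ Subgroup.zpowers ρ) [DecidableEq F] {k : ℕ}
    (hk0 : 0 < k) (hk : k ∣ Fintype.card F - 1) {χ : MulChar F ℂ}
    (hχ : IsPrimitiveRoot (χ ρ) k) (a : Fˣ) (u : F) :
    (#{x : Fˣ | (a : F) * (x : F) ^ k = u} : ℂ) =
      ∑ m ∈ range k, χ ((a⁻¹ : Fˣ) : F) ^ m * (χ ^ m) u := by
  rcases eq_or_ne u 0 with rfl | hu
  · have h0 : ∀ m, (χ ^ m) (0 : F) = 0 := fun m => MulChar.map_nonunit _ not_isUnit_zero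
    simp [h0, hk0.ne']
  · lift u to Fˣ using hu.isUnit
    obtain ⟨t, ht⟩ := Subgroup.mem_zpowers_iff.1 (hρ (a⁻¹ * u))
    have h1 : ∀ x : Fˣ, ((a : F) * (x : F) ^ k = u ↔ x ^ k = ρ ^ t) := fun x => by
      rw [ht, eq_inv_mul_iff_mul_eq, Units.ext_iff]; simp
    simp only [h1]
    rw [card_pow_eq_zpow hρ hk0 hk t]
    have h2 : ∀ m, χ ((a⁻¹ : Fˣ) : F) ^ m * (χ ^ m) u = ((χ ρ) ^ t) ^ m := fun m => by
      rw [MulChar.pow_apply_coe, ← mul_pow, ← map_mul, ← Units.val_mul, ← ht, mulChar_zpow]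
    simp only [h2]
    rw [geom_sum_zpow_primitiveRoot hχ]
    split_ifs <;> simp

/-- The substitution `x ↦ x^p` shows `J(χ^p, ψ^p) = J(χ, ψ)`. -/
lemma jacobiSum_inv_inv_of_frobenius (p : ℕ) [Fact p.Prime] [CharP F p] {χ ψ : MulChar F ℂ}
    (hχ : χ ^ p = χ⁻¹) (hψ : ψ ^ p = ψ⁻¹) : jacobiSum χ⁻¹ ψ⁻¹ = jacobiSum χ ψ := by
  have hp0 : p ≠ 0 := (Fact.out : p.Prime).ne_zero
  rw [← hχ, ← hψ]
  unfold jacobiSum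
  rw [← (frobeniusEquiv F p).toEquiv.sum_comp (fun x => χ x * ψ (1 - x))]
  refine Finset.sum_congr rfl fun x _ => ?_
  have h1 : (frobeniusEquiv F p).toEquiv x = x ^ p := rfl
  have h2 : (1 : F) - x ^ p = (1 - x) ^ p := by rw [sub_pow_char, one_pow]
  rw [h1, h2, map_pow, map_pow, MulChar.pow_apply' _ hp0, MulChar.pow_apply' _ hp0]

/-- The points on `a x^k + b y^l = 1`, sorted by the value `u = a x^k`. -/
lemma card_curve_eq_sum [DecidableEq F] (a b : Fˣ) (k l : ℕ) :
    Nat.card {xy : Fˣ × Fˣ // (a : F) * (xy.1 : F) ^ k + (b : F) * (xy.2 : F) ^ l = 1} =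
      ∑ u : F, #{x : Fˣ | (a : F) * (x : F) ^ k = u} * #{y : Fˣ | (b : F) * (y : F) ^ l = 1 - u} := by
  rw [Nat.card_eq_fintype_card, Fintype.card_subtype,
    Finset.card_eq_sum_card_fiberwise (f := fun xy : Fˣ × Fˣ => (a : F) * (xy.1 : F) ^ k)
      (t := univ) (fun _ _ => mem_coe.2 (mem_univ _))]
  refine Finset.sum_congr rfl fun u _ => ?_
  rw [← Finset.card_product]
  congr 1
  ext ⟨x, y⟩
  simp only [mem_filter, mem_univ, true_and, mem_product]
  constructor
  · rintro ⟨h1, h2⟩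
    exact ⟨h2, by rw [← h1, ← h2]; ring⟩
  · rintro ⟨h1, h2⟩
    exact ⟨by rw [h1, h2]; ring, h1⟩

/-- The number of points with nonzero coordinates on `a x^k + b y^l = 1` in terms of Jacobi sums. -/
lemma card_curve_eq_jacobiSum (hρ : ∀ x : Fˣ, x ∈ Subgroup.zpowers ρ) {k l : ℕ}
    (hk0 : 0 < k) (hk : k ∣ Fintype.card F - 1) (hl0 : 0 < l) (hl : l ∣ Fintype.card F - 1)
    {χ ψ : MulChar F ℂ} (hχ : IsPrimitiveRoot (χ ρ) k) (hψ : IsPrimitiveRoot (ψ ρ) l)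
    (a b : Fˣ) :
    (Nat.card {xy : Fˣ × Fˣ // (a : F) * (xy.1 : F) ^ k + (b : F) * (xy.2 : F) ^ l = 1} : ℂ) =
      ∑ m ∈ range k, ∑ r ∈ range l,
        χ ((a⁻¹ : Fˣ) : F) ^ m * ψ ((b⁻¹ : Fˣ) : F) ^ r * jacobiSum (χ ^ m) (ψ ^ r) := by
  classical
  rw [card_curve_eq_sum]
  simp only [Nat.cast_sum, Nat.cast_mul, card_mul_pow_eq hρ hk0 hk hχ, card_mul_pow_eq hρ hl0 hl hψ, Finset.sum_mul_sum]
  rw [Finset.sum_comm]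
  refine Finset.sum_congr rfl fun m _ => ?_
  rw [Finset.sum_comm]
  refine Finset.sum_congr rfl fun r _ => ?_
  rw [jacobiSum, Finset.mul_sum]
  refine Finset.sum_congr rfl fun u _ => ?_
  ring

end

/-- For an odd prime `p ≡ 2 (mod 3)` and `q = p^{2n}`, the error terms
`N_{ij} = |C*_{ij}| - q + D₃(i) + D₂(j)` for the curves
`C*_{ij} = {(x,y) ∈ (𝔽_q^*)² : ρ^i·x³ + ρ^j·y² = 1}` all belong to
`{±p^n, ±2p^n}`; in particular they are all nonzero, and the value `2p^n` is attained
in absolute value. -/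
theorem curve_x3_y2_sharp {p n q : ℕ} (hp : p.Prime) (hodd : Odd p) (hp3 : p % 3 = 2)
    (hn : 1 ≤ n) (hq : q = p ^ (2 * n))
    {F : Type*} [Field F] [Fintype F] (hF : Fintype.card F = q)
    (ρ : Fˣ) (hρ : ∀ x : Fˣ, x ∈ Subgroup.zpowers ρ)
    (C : ℤ → ℤ → ℕ)
    (hC : ∀ i j : ℤ, C i j = Nat.card {xy : Fˣ × Fˣ //
      ((ρ ^ i : Fˣ) : F) * (xy.1 : F) ^ 3 + ((ρ ^ j : Fˣ) : F) * (xy.2 : F) ^ 2 = 1})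
    (N : ℤ → ℤ → ℤ)
    (hN : ∀ i j : ℤ, N i j = (C i j : ℤ) - (q : ℤ)
      + (if (3 : ℤ) ∣ i then 3 else 0) + (if (2 : ℤ) ∣ j then 2 else 0)) :
    (∀ i j : ℤ, N i j = (p : ℤ) ^ n ∨ N i j = -((p : ℤ) ^ n) ∨
        N i j = 2 * (p : ℤ) ^ n ∨ N i j = -(2 * (p : ℤ) ^ n)) ∧
      (∀ i j : ℤ, N i j ≠ 0) ∧
      (∃ i j : ℤ, |N i j| = 2 * (p : ℤ) ^ n) := by
  have : Fact p.Prime := ⟨hp⟩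
  have hcard : Fintype.card F = p ^ (2 * n) := hF.trans hq
  have hchar : CharP F p := by
    apply charP_of_card_eq_prime_pow (f := 2 * n)
    exact hcard
  have h3 : 3 ∣ Fintype.card F - 1 := by
    rw [hcard, ← Nat.modEq_iff_dvd' (Nat.one_le_pow _ _ hp.pos), pow_mul]
    have h : 1 ≡ p ^ 2 [MOD 3] := by simp [Nat.ModEq, Nat.pow_mod, hp3]
    simpa using h.pow n
  have h2 : 2 ∣ Fintype.card F - 1 := by
    rw [hcard]
    exact (hodd.pow.tsub_odd odd_one).two_dvd
  obtain ⟨χ, hχ⟩ := exists_mulChar_primitive hρ three_ne_zero h3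
  obtain ⟨ψ, hψ⟩ := exists_mulChar_primitive hρ two_ne_zero h2
  have hχ3 := mulChar_pow_eq_one hρ hχ
  have hψ2 := mulChar_pow_eq_one hρ hψ
  have hχ1 : χ ≠ 1 := by
    rintro rfl
    exact hχ.ne_one (by norm_num) (MulChar.one_apply_coe _)
  have hψ1 : ψ ≠ 1 := by
    rintro rfl
    exact hψ.ne_one (by norm_num) (MulChar.one_apply_coe _)
  have hχinv : χ ^ 2 = χ⁻¹ := by
    rw [eq_inv_iff_mul_eq_one, ← pow_succ, hχ3]
  have hψinv : ψ = ψ⁻¹ := by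
    rw [eq_inv_iff_mul_eq_one, ← sq, hψ2]
  have hχp : χ ^ p = χ⁻¹ := by
    rw [← hχinv, pow_eq_pow_mod p hχ3, hp3]
  have hψp : ψ ^ p = ψ⁻¹ := by
    rw [← hψinv, pow_eq_pow_mod p hψ2, Nat.odd_iff.1 hodd, pow_one]
  have hχψ : χ * ψ ≠ 1 := by
    intro h
    apply hχ1
    -- `χψ = 1` gives `χ = ψ⁻¹`, whence `χ² = 1`, which with `χ³ = 1` forces `χ = 1`
    have e : χ = ψ := (eq_inv_of_mul_eq_one_left h).trans hψinv.symm
    have e2 : χ ^ 2 = 1 := by rw [e, hψ2]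
    rw [pow_succ, e2, one_mul] at hχ3
    exact hχ3
  have hJinv := jacobiSum_inv_inv_of_frobenius p hχp hψp
  have hJ : jacobiSum χ ψ = (p : ℂ) ^ n ∨ jacobiSum χ ψ = -(p : ℂ) ^ n := by
    rw [← sq_eq_sq_iff_eq_or_eq_neg, sq]
    have hr : ringChar ℂ ≠ ringChar F := by
      rw [ringChar.eq_zero, ringChar.eq F p]
      exact hp.ne_zero.symm
    have h := jacobiSum_mul_jacobiSum_inv hr hχ1 hψ1 hχψ
    rw [hJinv] at h
    rw [h, hcard]
    push_cast
    ring
  -- `D_k(i)` as the sum of the values at `ρ^(-i)` of the characters of exponent `k`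
  have hD : ∀ {ω : MulChar F ℂ} {k : ℕ}, IsPrimitiveRoot (ω ρ) k → ∀ i : ℤ,
      ((if (k : ℤ) ∣ i then (k : ℂ) else 0)) = ∑ m ∈ range k, ω (((ρ ^ i)⁻¹ : Fˣ) : F) ^ m := by
    intro ω k hω i
    rw [← zpow_neg, mulChar_zpow, geom_sum_zpow_primitiveRoot hω]
    simp
  -- the cubic factor `χ(a)⁻¹ + χ(a)⁻²` is written as `D₃(i) - 1`
  have key : ∀ i j : ℤ, (N i j : ℂ) = ψ (((ρ ^ j)⁻¹ : Fˣ) : F) *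
      ((if (3 : ℤ) ∣ i then 3 else 0) - 1) * jacobiSum χ ψ := by
    intro i j
    have d3 := hD hχ i
    have d2 := hD hψ j
    have hc := card_curve_eq_jacobiSum hρ (k := 3) (l := 2) (by norm_num) h3 (by norm_num) h2 hχ hψ (ρ ^ i) (ρ ^ j)
    rw [← hC] at hc
    have e1 : jacobiSum (χ ^ 2) ψ = jacobiSum χ ψ := by
      rw [hχinv, ← hJinv, ← hψinv]
    have e2 : jacobiSum (χ ^ 2) 1 = -1 := by
      rw [jacobiSum_comm]
      exact jacobiSum_one_nontrivial (by rw [hχinv]; exact inv_ne_one.2 hχ1)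
    have e3 : jacobiSum χ 1 = -1 := by
      rw [jacobiSum_comm]; exact jacobiSum_one_nontrivial hχ1
    simp only [sum_range_succ, sum_range_zero, pow_zero, pow_one, e1, e2, e3, jacobiSum_one_one,
      jacobiSum_one_nontrivial hψ1, Nat.cast_ofNat, hF] at hc d3 d2
    rw [hN]
    generalize χ (((ρ ^ i)⁻¹ : Fˣ) : F) = c at *
    generalize ψ (((ρ ^ j)⁻¹ : Fˣ) : F) = e at *
    push_cast
    rw [d3, d2, hc]
    ring
  have hψval : ∀ j : ℤ, ψ (((ρ ^ j)⁻¹ : Fˣ) : F) = 1 ∨ ψ (((ρ ^ j)⁻¹ : Fˣ) : F) = -1 := by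
    intro j
    rw [← sq_eq_one_iff, ← MulChar.pow_apply_coe, hψ2, MulChar.one_apply_coe]
  have main : ∀ i j : ℤ, (N i j = (p : ℤ) ^ n ∨ N i j = -((p : ℤ) ^ n) ∨
        N i j = 2 * (p : ℤ) ^ n ∨ N i j = -(2 * (p : ℤ) ^ n)) := by
    intro i j
    have h := key i j
    have hcast : ∀ z : ℤ, (N i j : ℂ) = (z : ℂ) → N i j = z := fun z hz => by exact_mod_cast hz
    by_cases h3i : (3 : ℤ) ∣ i
    · rw [if_pos h3i] at h
      right; right
      rcases hψval j with hv | hv <;> rcases hJ with hJ | hJ <;> rw [hv, hJ] at h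
      · left; apply hcast; rw [h]; push_cast; ring
      · right; apply hcast; rw [h]; push_cast; ring
      · right; apply hcast; rw [h]; push_cast; ring
      · left; apply hcast; rw [h]; push_cast; ring
    · rw [if_neg h3i] at h
      rcases hψval j with hv | hv <;> rcases hJ with hJ | hJ <;> rw [hv, hJ] at h
      · right; left; apply hcast; rw [h]; push_cast; ring
      · left; apply hcast; rw [h]; push_cast; ring
      · left; apply hcast; rw [h]; push_cast; ring
      · right; left; apply hcast; rw [h]; push_cast; ring
  have hpos : (0 : ℤ) < (p : ℤ) ^ n := pow_pos (by exact_mod_cast hp.pos) n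
  refine ⟨main, fun i j => ?_, 0, 0, ?_⟩
  · rcases main i j with h | h | h | h <;> rw [h] <;> linarith
  · have h := key 0 0
    simp only [zpow_zero, inv_one, Units.val_one, map_one, dvd_zero, if_true] at h
    have h' : N 0 0 = 2 * (p : ℤ) ^ n ∨ N 0 0 = -(2 * (p : ℤ) ^ n) := by
      rcases hJ with hJ | hJ <;> rw [hJ] at h
      · left; have : (N 0 0 : ℂ) = ((2 * (p : ℤ) ^ n : ℤ) : ℂ) := by rw [h]; push_cast; ring
        exact_mod_cast this
      · right; have : (N 0 0 : ℂ) = ((-(2 * (p : ℤ) ^ n) : ℤ) : ℂ) := by rw [h]; push_cast; ring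
        exact_mod_cast this
    rcases h' with h | h <;> rw [h]
    · exact abs_of_pos (by linarith)
    · rw [abs_neg]; exact abs_of_pos (by linarith)
end
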